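/- arXiv:2509.10806 — 5 statements merged into one kernel-verified Lean document; each statement's English description precedes it below -/
import Mathlib

section
/- Let d ≥ 1 be an integer and γ ∈ (1/2, (d+2)/4). Define c_{d,γ} = π^{-d/2} Γ(2γ-1) Γ((d+1-2γ)/2)^2 / (Γ((d+2-4γ)/2) Γ((2γ-1)/2)^2) and h(ξ) = c_{d,γ}|ξ|^{2γ-d-1} for ξ ∈ ℝ^d \ {0}. Then for every ξ ∈ ℝ^d \ {0}, the convolution integral ∫_{ℝ^d} h(η) h(ξ-η) dη converges and equals |ξ|^{2γ-1} h(ξ). -/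
open MeasureTheory Set

/-- The constant `c_{d,γ}` of the standard majorizing kernel. -/
noncomputable def cdg (d : ℕ) (γ : ℝ) : ℝ :=
  Real.pi ^ (-(d : ℝ)/2) * Real.Gamma (2*γ - 1) * (Real.Gamma (((d : ℝ) + 1 - 2*γ)/2))^2 /
    (Real.Gamma (((d : ℝ) + 2 - 4*γ)/2) * (Real.Gamma ((2*γ - 1)/2))^2)

/-- The standard majorizing kernel `h(ξ) = c_{d,γ} |ξ|^{2γ-d-1}`. -/
noncomputable def hker (d : ℕ) (γ : ℝ) (ξ : EuclideanSpace ℝ (Fin d)) : ℝ :=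
  cdg d γ * ‖ξ‖ ^ (2*γ - (d : ℝ) - 1)

lemma rk_gamma {p c : ℝ} (hp : 0 < p) (hc : 0 < c) :
    ∫⁻ t in Ioi (0:ℝ), ENNReal.ofReal (t ^ (p - 1) * Real.exp (-(c * t))) =
      ENNReal.ofReal (Real.Gamma p * c ^ (-p)) := by
  have h := Real.integral_rpow_mul_exp_neg_mul_Ioi hp hc
  have hpos : 0 < (1 / c) ^ p * Real.Gamma p :=
    mul_pos (Real.rpow_pos_of_pos (by positivity) _) (Real.Gamma_pos_of_pos hp)
  have hi : IntegrableOn (fun t : ℝ => t ^ (p - 1) * Real.exp (-(c * t))) (Ioi 0) := by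
    by_contra hn
    rw [integral_undef hn] at h
    exact hpos.ne h
  rw [← ofReal_integral_eq_lintegral_ofReal hi, h, one_div, Real.inv_rpow hc.le,
    Real.rpow_neg hc.le, mul_comm]
  filter_upwards [ae_restrict_mem measurableSet_Ioi] with t ht
  have : (0:ℝ) < t := ht
  simp only [Pi.zero_apply]
  positivity

lemma rk_gamma_mul {p c k : ℝ} (hp : 0 < p) (hc : 0 < c) (hk : 0 ≤ k) :
    ∫⁻ t in Ioi (0:ℝ), ENNReal.ofReal (k * (t ^ (p - 1) * Real.exp (-(c * t)))) =
      ENNReal.ofReal (k * (Real.Gamma p * c ^ (-p))) := by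
  simp_rw [ENNReal.ofReal_mul hk]
  rw [lintegral_const_mul' _ _ ENNReal.ofReal_ne_top, rk_gamma hp hc]

lemma rk_scale {s : ℝ} (hs : 0 < s) (f : ℝ → ENNReal) :
    ∫⁻ t in Ioi (0:ℝ), f t = ∫⁻ v in Ioi (0:ℝ), ENNReal.ofReal s * f (s * v) := by
  have himg : (fun v => s * v) '' Ioi (0:ℝ) = Ioi 0 := by
    rw [image_mul_left_Ioi hs, mul_zero]
  conv_lhs => rw [← himg]
  rw [lintegral_image_eq_lintegral_abs_deriv_mul (f' := fun _ => s) measurableSet_Ioi]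
  · simp [abs_of_pos hs]
  · intro x _
    simpa using ((hasDerivAt_id x).const_mul s).hasDerivWithinAt
  · exact (mul_right_injective₀ hs.ne').injOn

lemma rk_gauss (d : ℕ) (ξ : EuclideanSpace ℝ (Fin d)) {s t k : ℝ} (hs : 0 < s) (ht : 0 < t)
    (hk : 0 ≤ k) :
    ∫⁻ η : EuclideanSpace ℝ (Fin d),
      ENNReal.ofReal (k * Real.exp (-(s * ‖η‖^2) - t * ‖ξ - η‖^2)) =
    ENNReal.ofReal (k * ((Real.pi / (s + t)) ^ ((d:ℝ)/2) *
      Real.exp (-(s * t / (s + t) * ‖ξ‖^2)))) := by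
  have hst : 0 < s + t := by positivity
  have h1 : ∀ η : EuclideanSpace ℝ (Fin d), -(s * ‖η‖^2) - t * ‖ξ - η‖^2 =
      -(s * t / (s + t) * ‖ξ‖^2) + (-(s+t) * ‖η - (t/(s+t)) • ξ‖^2) := by
    intro η
    rw [norm_sub_sq_real, norm_sub_sq_real, norm_smul, inner_smul_right, real_inner_comm,
      mul_pow, Real.norm_eq_abs, sq_abs]
    field_simp
    ring
  have h := GaussianFourier.integral_rexp_neg_mul_sq_norm (V := EuclideanSpace ℝ (Fin d)) hst
  rw [finrank_euclideanSpace_fin] at h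
  have hpos : 0 < (Real.pi / (s + t)) ^ ((d:ℝ)/2) := by positivity
  have hi : Integrable (fun v : EuclideanSpace ℝ (Fin d) => Real.exp (-(s+t) * ‖v‖^2)) := by
    by_contra hn
    rw [integral_undef hn] at h
    exact hpos.ne h
  simp_rw [h1, Real.exp_add, ← mul_assoc]
  have hk' : 0 ≤ k * Real.exp (-(s * t / (s + t) * ‖ξ‖^2)) := by positivity
  simp_rw [ENNReal.ofReal_mul hk']
  rw [lintegral_const_mul' _ _ ENNReal.ofReal_ne_top,
    lintegral_sub_right_eq_self
      (fun v : EuclideanSpace ℝ (Fin d) => ENNReal.ofReal (Real.exp (-(s+t) * ‖v‖^2))),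
    ← ofReal_integral_eq_lintegral_ofReal hi, h, ← ENNReal.ofReal_mul hk']
  · congr 1; ring
  · exact Filter.Eventually.of_forall fun v => (Real.exp_pos _).le

/-- beta prime integral -/
lemma rk_beta {α : ℝ} (hα : 0 < α) {C : ℝ} (hC : 0 ≤ C) :
    ∫⁻ v in Ioi (0:ℝ), ENNReal.ofReal (C * (v ^ (α/2 - 1) * (1 + v) ^ (-α))) =
      ENNReal.ofReal (C * (Real.Gamma (α/2) ^ 2 / Real.Gamma α)) := by
  have hG := Real.Gamma_pos_of_pos hα
  have hG2 := Real.Gamma_pos_of_pos (half_pos hα)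
  have e1 : ∀ v ∈ Ioi (0:ℝ), ENNReal.ofReal (C * (v ^ (α/2 - 1) * (1 + v) ^ (-α))) =
      ∫⁻ r in Ioi (0:ℝ), ENNReal.ofReal
        (C / Real.Gamma α * (v ^ (α/2-1)) * (r ^ (α - 1) * Real.exp (-((1 + v) * r)))) := by
    intro v hv
    have hv : (0:ℝ) < v := hv
    rw [rk_gamma_mul hα (by positivity) (by positivity)]
    congr 1
    field_simp
  rw [setLIntegral_congr_fun measurableSet_Ioi e1, lintegral_lintegral_swap (by fun_prop)]
  have e2 : ∀ r ∈ Ioi (0:ℝ), (∫⁻ v in Ioi (0:ℝ), ENNReal.ofReal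
        (C / Real.Gamma α * (v ^ (α/2-1)) * (r ^ (α - 1) * Real.exp (-((1 + v) * r))))) =
      ENNReal.ofReal (C / Real.Gamma α * Real.Gamma (α/2) *
        (r ^ (α/2 - 1) * Real.exp (-(1 * r)))) := by
    intro r hr
    have hr : (0:ℝ) < r := hr
    have := rk_gamma_mul (p := α/2) (c := r) (k := C / Real.Gamma α * (r ^ (α - 1) *
      Real.exp (-r))) (by positivity) hr (by positivity)
    convert this using 1
    · refine lintegral_congr fun v => ?_
      congr 1
      rw [show -((1 + v) * r) = -r + -(r * v) by ring, Real.exp_add]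
      ring
    · congr 1
      rw [show α/2 - 1 = (α - 1) + (-(α/2)) by ring, Real.rpow_add hr]
      ring_nf
  rw [setLIntegral_congr_fun measurableSet_Ioi e2,
    rk_gamma_mul (by positivity) one_pos (by positivity)]
  congr 1
  rw [Real.one_rpow]
  field_simp

lemma rk_main (d : ℕ) (hd : 1 ≤ d) {α : ℝ} (hα : 0 < α) (hα2 : α < (d:ℝ)/2)
    (ξ : EuclideanSpace ℝ (Fin d)) (hξ : ξ ≠ 0) :
    ∫⁻ η : EuclideanSpace ℝ (Fin d), ENNReal.ofReal
      (Real.Gamma (((d:ℝ) - α)/2) ^ 2 * (‖η‖ ^ (α - d) * ‖ξ - η‖ ^ (α - d))) =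
    ENNReal.ofReal (Real.pi ^ ((d:ℝ)/2) * Real.Gamma ((d:ℝ)/2 - α) * ‖ξ‖ ^ (2 * α - d) *
      (Real.Gamma (α/2) ^ 2 / Real.Gamma α)) := by
  obtain ⟨a, ha⟩ : ∃ a, a = ((d:ℝ) - α)/2 := ⟨_, rfl⟩
  obtain ⟨b, hb⟩ : ∃ b, b = (d:ℝ)/2 - α := ⟨_, rfl⟩
  have hb0 : 0 < b := by linarith
  have ha0 : 0 < a := by linarith
  have hn : 0 < ‖ξ‖ := norm_pos_iff.2 hξ
  have hGa := Real.Gamma_pos_of_pos ha0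
  have hGb := Real.Gamma_pos_of_pos hb0
  rw [← ha, ← hb]
  have : Nonempty (Fin d) := ⟨⟨0, hd⟩⟩
  have sq_pow : ∀ x : ℝ, 0 < x → (x^2) ^ (-a) = x ^ (α - d) := by
    intro x hx
    rw [← Real.rpow_natCast, ← Real.rpow_mul hx.le]
    congr 1
    push_cast
    linarith
  have e1 : ∀ᵐ η : EuclideanSpace ℝ (Fin d), ENNReal.ofReal
      (Real.Gamma a ^ 2 * (‖η‖ ^ (α - d) * ‖ξ - η‖ ^ (α - d))) =
      ∫⁻ s in Ioi (0:ℝ), ∫⁻ t in Ioi (0:ℝ), ENNReal.ofReal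
        (s ^ (a-1) * t ^ (a-1) * Real.exp (-(s * ‖η‖^2) - t * ‖ξ - η‖^2)) := by
    filter_upwards [Measure.ae_ne volume (0 : EuclideanSpace ℝ (Fin d)), Measure.ae_ne volume ξ] with η h0 h1
    have h0 : 0 < ‖η‖ := norm_pos_iff.2 h0
    have h1 : 0 < ‖ξ - η‖ := norm_pos_iff.2 (sub_ne_zero.2 (Ne.symm h1))
    have i1 : ∀ s ∈ Ioi (0:ℝ), (∫⁻ t in Ioi (0:ℝ), ENNReal.ofReal
        (s ^ (a-1) * t ^ (a-1) * Real.exp (-(s * ‖η‖^2) - t * ‖ξ - η‖^2))) =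
        ENNReal.ofReal (Real.Gamma a * ‖ξ - η‖ ^ (α - d) *
          (s ^ (a-1) * Real.exp (-(‖η‖^2 * s)))) := by
      intro s hs
      have hs : (0:ℝ) < s := hs
      have := rk_gamma_mul (p := a) (c := ‖ξ - η‖^2) (k := s ^ (a-1) *
        Real.exp (-(s * ‖η‖^2))) ha0 (by positivity) (by positivity)
      convert this using 1
      · refine lintegral_congr fun v => ?_
        congr 1
        rw [show -(s * ‖η‖^2) - v * ‖ξ - η‖^2 = -(s * ‖η‖^2) + -(‖ξ - η‖^2 * v) by ring,
          Real.exp_add]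
        ring
      · congr 1
        rw [sq_pow _ h1]
        ring_nf
    rw [setLIntegral_congr_fun measurableSet_Ioi i1,
      rk_gamma_mul ha0 (by positivity) (by positivity), sq_pow _ h0]
    congr 1
    ring
  rw [lintegral_congr_ae e1, lintegral_lintegral_swap]
  swap
  · refine Measurable.aemeasurable ?_
    refine Measurable.lintegral_prod_right' (f := fun p : (EuclideanSpace ℝ (Fin d) × ℝ) × ℝ =>
      ENNReal.ofReal (p.1.2 ^ (a-1) * p.2 ^ (a-1) *
        Real.exp (-(p.1.2 * ‖p.1.1‖^2) - p.2 * ‖ξ - p.1.1‖^2))) ?_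
    fun_prop
  have e2 : ∀ s ∈ Ioi (0:ℝ), (∫⁻ η : EuclideanSpace ℝ (Fin d), ∫⁻ t in Ioi (0:ℝ),
      ENNReal.ofReal
        (s ^ (a-1) * t ^ (a-1) * Real.exp (-(s * ‖η‖^2) - t * ‖ξ - η‖^2))) =
      ∫⁻ v in Ioi (0:ℝ), ENNReal.ofReal (Real.pi ^ ((d:ℝ)/2) * v ^ (a - 1) *
        (1 + v) ^ (-((d:ℝ)/2)) * (s ^ (b - 1) * Real.exp (-((v / (1 + v) * ‖ξ‖^2) * s)))) := by
    intro s hs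
    have hs : (0:ℝ) < s := hs
    rw [lintegral_lintegral_swap (by fun_prop)]
    have i1 : ∀ t ∈ Ioi (0:ℝ), (∫⁻ η : EuclideanSpace ℝ (Fin d), ENNReal.ofReal
        (s ^ (a-1) * t ^ (a-1) * Real.exp (-(s * ‖η‖^2) - t * ‖ξ - η‖^2))) =
        ENNReal.ofReal (s ^ (a-1) * t ^ (a-1) * ((Real.pi / (s + t)) ^ ((d:ℝ)/2) *
      Real.exp (-(s * t / (s + t) * ‖ξ‖^2)))) := by
      intro t ht
      have ht : (0:ℝ) < t := ht
      exact rk_gauss d ξ hs ht (by positivity)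
    rw [setLIntegral_congr_fun measurableSet_Ioi i1, rk_scale hs]
    refine setLIntegral_congr_fun measurableSet_Ioi fun v hv => ?_
    have hv : (0:ℝ) < v := hv
    rw [← ENNReal.ofReal_mul hs.le]
    congr 1
    have hv1 : 0 < 1 + v := by positivity
    have hsb : s ^ (b - 1) = s * s ^ (a - 1) * s ^ (a - 1) / s ^ ((d:ℝ)/2) := by
      rw [show b - 1 = 1 + (a - 1) + (a - 1) - (d:ℝ)/2 by rw [ha, hb]; ring,
        Real.rpow_sub hs _ ((d:ℝ)/2), Real.rpow_add hs, Real.rpow_add hs, Real.rpow_one]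
    rw [show s + s * v = s * (1 + v) by ring, Real.div_rpow Real.pi_pos.le (by positivity),
      Real.mul_rpow hs.le hv1.le, Real.mul_rpow hs.le hv.le, Real.rpow_neg hv1.le,
      show s * (s * v) / (s * (1 + v)) * ‖ξ‖^2 = v / (1 + v) * ‖ξ‖^2 * s by field_simp,
      hsb]
    generalize s ^ (a - 1) = A
    generalize v ^ (a - 1) = B
    field_simp
  rw [setLIntegral_congr_fun measurableSet_Ioi e2, lintegral_lintegral_swap (by fun_prop)]
  have e3 : ∀ v ∈ Ioi (0:ℝ), (∫⁻ s in Ioi (0:ℝ), ENNReal.ofReal (Real.pi ^ ((d:ℝ)/2) *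
        v ^ (a - 1) *
        (1 + v) ^ (-((d:ℝ)/2)) * (s ^ (b - 1) * Real.exp (-((v / (1 + v) * ‖ξ‖^2) * s))))) =
      ENNReal.ofReal (Real.pi ^ ((d:ℝ)/2) * Real.Gamma b * ‖ξ‖ ^ (2 * α - d) *
        (v ^ (α/2 - 1) * (1 + v) ^ (-α))) := by
    intro v hv
    have hv : (0:ℝ) < v := hv
    have hv1 : 0 < 1 + v := by positivity
    rw [rk_gamma_mul hb0 (by positivity) (by positivity)]
    congr 1
    rw [Real.mul_rpow (by positivity) (by positivity), Real.div_rpow hv.le hv1.le,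
      ← Real.rpow_natCast ‖ξ‖, ← Real.rpow_mul hn.le,
      show ((2:ℕ):ℝ) * -b = 2 * α - d by push_cast; linarith,
      show α/2 - 1 = (a - 1) + (-b) by rw [ha, hb]; ring,
      show -α = -((d:ℝ)/2) - (-b) by rw [hb]; ring,
      Real.rpow_add hv, Real.rpow_sub hv1]
    field_simp
  rw [setLIntegral_congr_fun measurableSet_Ioi e3, rk_beta hα (by positivity)]

theorem stmt0 (d : ℕ) (hd : 1 ≤ d) (γ : ℝ)
    (hγ : γ ∈ Set.Ioo (1/2 : ℝ) (((d : ℝ) + 2)/4))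
    (ξ : EuclideanSpace ℝ (Fin d)) (hξ : ξ ≠ 0) :
    Integrable (fun η => hker d γ η * hker d γ (ξ - η)) (volume : Measure (EuclideanSpace ℝ (Fin d))) ∧
    ∫ η, hker d γ η * hker d γ (ξ - η) = ‖ξ‖ ^ (2*γ - 1) * hker d γ ξ := by
  obtain ⟨h1, h2⟩ := hγ
  obtain ⟨α, hα⟩ : ∃ α, α = 2 * γ - 1 := ⟨_, rfl⟩
  have hα0 : 0 < α := by linarith
  have hα2 : α < (d:ℝ)/2 := by linarith
  have hn : 0 < ‖ξ‖ := norm_pos_iff.2 hξ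
  have m := rk_main d hd hα0 hα2 ξ hξ
  have g1 := Real.Gamma_pos_of_pos (show 0 < ((d:ℝ) - α)/2 by linarith)
  have g2 := Real.Gamma_pos_of_pos (show 0 < (d:ℝ)/2 - α by linarith)
  have g3 := Real.Gamma_pos_of_pos hα0
  have g4 := Real.Gamma_pos_of_pos (half_pos hα0)
  have hc : cdg d γ = Real.pi ^ (-((d:ℝ)/2)) * Real.Gamma α * Real.Gamma (((d:ℝ) - α)/2) ^ 2 /
      (Real.Gamma ((d:ℝ)/2 - α) * Real.Gamma (α/2) ^ 2) := by
    unfold cdg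
    rw [hα, show (d:ℝ) + 1 - 2 * γ = d - (2 * γ - 1) by ring,
      show ((d:ℝ) + 2 - 4 * γ)/2 = d/2 - (2 * γ - 1) by ring, neg_div]
  have hc0 : 0 < cdg d γ := by rw [hc]; positivity
  have hk : ∀ x, hker d γ x = cdg d γ * ‖x‖ ^ (α - d) := by
    intro x
    unfold hker
    rw [hα, show 2 * γ - (d:ℝ) - 1 = 2 * γ - 1 - d by ring]
  have hval : ∫ η : EuclideanSpace ℝ (Fin d),
      (Real.Gamma (((d:ℝ) - α)/2) ^ 2 * (‖η‖ ^ (α - d) * ‖ξ - η‖ ^ (α - d))) =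
      Real.pi ^ ((d:ℝ)/2) * Real.Gamma ((d:ℝ)/2 - α) * ‖ξ‖ ^ (2 * α - d) *
      (Real.Gamma (α/2) ^ 2 / Real.Gamma α) := by
    rw [integral_eq_lintegral_of_nonneg_ae, m, ENNReal.toReal_ofReal (by positivity)]
    · exact Filter.Eventually.of_forall fun η => by simp only [Pi.zero_apply]; positivity
    · refine Measurable.aestronglyMeasurable ?_
      fun_prop
  rw [integral_const_mul] at hval
  have hpp : Real.pi ^ (-((d:ℝ)/2)) * Real.pi ^ ((d:ℝ)/2) = 1 := by
    rw [← Real.rpow_add Real.pi_pos]; simp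
  have key : ∫ η, hker d γ η * hker d γ (ξ - η) = ‖ξ‖ ^ (2*γ - 1) * hker d γ ξ := by
    simp_rw [hk]
    have : ∀ η : EuclideanSpace ℝ (Fin d), cdg d γ * ‖η‖ ^ (α - d) * (cdg d γ * ‖ξ - η‖ ^ (α - d))
        = cdg d γ ^ 2 * (‖η‖ ^ (α - d) * ‖ξ - η‖ ^ (α - d)) := fun η => by ring
    simp_rw [this]
    rw [integral_const_mul, ← hα, mul_left_comm, ← Real.rpow_add hn,
      show α + (α - d) = 2 * α - d by ring, sq, mul_assoc]
    congr 1
    nth_rewrite 1 [hc]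
    generalize ∫ η : EuclideanSpace ℝ (Fin d), ‖η‖ ^ (α - d) * ‖ξ - η‖ ^ (α - d) = I at *
    calc _ = Real.pi ^ (-((d:ℝ)/2)) * Real.Gamma α /
      (Real.Gamma ((d:ℝ)/2 - α) * Real.Gamma (α/2) ^ 2) * (Real.Gamma (((d:ℝ) - α)/2) ^ 2 * I) := by
            ring
      _ = (Real.pi ^ (-((d:ℝ)/2)) * Real.pi ^ ((d:ℝ)/2)) * ‖ξ‖ ^ (2 * α - d) := by
            rw [hval]
            generalize Real.Gamma ((d:ℝ)/2 - α) = G at *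
            field_simp
      _ = _ := by rw [hpp, one_mul]
  refine ⟨?_, key⟩
  by_contra hni
  rw [integral_undef hni, hk] at key
  have : 0 < ‖ξ‖ ^ (2*γ - 1) * (cdg d γ * ‖ξ‖ ^ (α - d)) := by positivity
  exact this.ne key
end

section
/- Let d ≥ 2 be an integer, γ ∈ (1/2,(d+2)/4), a = (d+1)/2 − γ, and C̄_{d,γ} = (2/√π)·Γ(2γ−1)Γ(a)² / (Γ((d−1)/2)·Γ(2a − d/2)·Γ((2γ−1)/2)²). Then for every ξ ∈ ℝ^d \ {0} and every bounded measurable k : [0,∞) → ℝ, ∫_{ℝ^d} k(|η|/|ξ|) H(η|ξ) dη = ∫_0^∞ k(r) g(r) dr, where g(r) = C̄_{d,γ} r^{2γ−2} ∫_0^{π/2} sin^{d−2}(φ) [ (1 − 2r cos φ + r²)^{−a} + (1 + 2r cos φ + r²)^{−a} ] dφ. -/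
open MeasureTheory Set Real

/-- `H(η|ξ) = c_{d,γ} |η|^{2γ−d−1} |ξ−η|^{2γ−d−1} |ξ|^{d+2−4γ}`. -/
noncomputable def Hker (d : ℕ) (γ : ℝ) (η ξ : EuclideanSpace ℝ (Fin d)) : ℝ :=
  cdg d γ * ‖η‖ ^ (2*γ - (d : ℝ) - 1) * ‖ξ - η‖ ^ (2*γ - (d : ℝ) - 1)
    * ‖ξ‖ ^ ((d : ℝ) + 2 - 4*γ)

/-- The constant `C̄_{d,γ}`. -/
noncomputable def Cbar (d : ℕ) (γ : ℝ) : ℝ :=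
  2 / Real.sqrt Real.pi * Real.Gamma (2*γ - 1) * (Real.Gamma (((d : ℝ) + 1)/2 - γ))^2 /
    (Real.Gamma (((d : ℝ) - 1)/2) * Real.Gamma (2*(((d : ℝ) + 1)/2 - γ) - (d : ℝ)/2)
      * (Real.Gamma ((2*γ - 1)/2))^2)

lemma lint_norm (m : ℕ) (G : ℝ → ENNReal) (hG : Measurable G) :
    ∫⁻ y : EuclideanSpace ℝ (Fin (m+1)), G ‖y‖ =
      ∫⁻ ρ in Ioi (0:ℝ), (volume : Measure (EuclideanSpace ℝ (Fin (m+1)))).toSphere univ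
        * ENNReal.ofReal (ρ ^ m) * G ρ := by
  set μ := (volume : Measure (EuclideanSpace ℝ (Fin (m+1))))
  have hdim : Module.finrank ℝ (EuclideanSpace ℝ (Fin (m+1))) - 1 = m := by simp
  have h1 : ∫⁻ y : EuclideanSpace ℝ (Fin (m+1)), G ‖y‖ =
      ∫⁻ x : ({(0)}ᶜ : Set (EuclideanSpace ℝ (Fin (m+1)))), G (‖x.1‖) ∂(μ.comap (↑)) := by
    rw [lintegral_subtype_comap (measurableSet_singleton _).compl fun x ↦ G (‖x‖),
      restrict_compl_singleton]
  have h2 : ∫⁻ x : ({(0)}ᶜ : Set (EuclideanSpace ℝ (Fin (m+1)))), G (‖x.1‖) ∂(μ.comap (↑))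
      = ∫⁻ x, G x.2 ∂μ.toSphere.prod (.volumeIoiPow m) := by
    have key := μ.measurePreserving_homeomorphUnitSphereProd.lintegral_comp_emb
      (Homeomorph.measurableEmbedding _) (G ∘ Subtype.val ∘ Prod.snd)
    rw [hdim] at key
    simpa using key
  rw [h1, h2, lintegral_prod _ (by fun_prop)]
  simp only [lintegral_const]
  rw [Measure.volumeIoiPow, lintegral_withDensity_eq_lintegral_mul _ (by fun_prop) (by fun_prop)]
  have := lintegral_subtype_comap (μ := (volume : Measure ℝ)) measurableSet_Ioi (s := Ioi (0:ℝ))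
    fun a ↦ ENNReal.ofReal (a ^ m) * G a
  simp only [Pi.mul_apply]
  rw [this, mul_comm, ← lintegral_const_mul _ (by fun_prop)]
  simp only [mul_assoc]

lemma sphere_const (m : ℕ) :
    (volume : Measure (EuclideanSpace ℝ (Fin (m+1)))).toSphere univ =
      ENNReal.ofReal (2 * √π ^ (m+1) / Gamma ((m+1)/2)) := by
  rw [Measure.toSphere_apply_univ, EuclideanSpace.volume_ball]
  have h : ((m:ℝ)+1)/2 ≠ 0 := by positivity
  have hg : 0 < Gamma (((m:ℝ)+1)/2) := Gamma_pos_of_pos (by positivity)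
  simp only [finrank_euclideanSpace, Fintype.card_fin, ENNReal.ofReal_one, one_pow, one_mul]
  rw [← ENNReal.ofReal_natCast, ← ENNReal.ofReal_mul (by positivity)]
  congr 1
  push_cast
  rw [Gamma_add_one h]
  field_simp

/-- x, ρ coordinates. -/
noncomputable def cyl (m : ℕ) (η : EuclideanSpace ℝ (Fin (m+2))) : ℝ × ℝ :=
  (η 0, ‖(WithLp.toLp 2 (fun i : Fin (m+1) => η i.succ) : EuclideanSpace ℝ (Fin (m+1)))‖)

lemma measurable_cyl (m : ℕ) : Measurable (cyl m) := by
  unfold cyl; fun_prop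

lemma lint_cyl (m : ℕ) (F : ℝ × ℝ → ENNReal) (hF : Measurable F) :
    ∫⁻ η, F (cyl m η) = ∫⁻ p in Ioi (0:ℝ) ×ˢ Ioo 0 π,
      ENNReal.ofReal (2 * √π ^ (m+1) / Gamma ((m+1)/2) * p.1 ^ (m+1) * sin p.2 ^ m) *
        F (p.1 * cos p.2, p.1 * sin p.2) := by
  set κ := 2 * √π ^ (m+1) / Gamma ((m+1)/2) with hκ
  have hκ0 : 0 ≤ κ := by
    have hg : 0 < Gamma (((m:ℝ)+1)/2) := Gamma_pos_of_pos (by positivity)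
    positivity
  have h1 : ∫⁻ η, F (cyl m η) = ∫⁻ z : ℝ × (Fin (m+1) → ℝ),
      F (z.1, ‖(WithLp.toLp 2 z.2 : EuclideanSpace ℝ (Fin (m+1)))‖) := by
    rw [← ((volume_preserving_piFinSuccAbove (fun _ : Fin (m+2) => ℝ) 0).comp
      (PiLp.volume_preserving_ofLp (Fin (m+2)))).lintegral_comp (by fun_prop)]
    rfl
  have h2 : ∀ x : ℝ, ∫⁻ y : Fin (m+1) → ℝ,
      F (x, ‖(WithLp.toLp 2 y : EuclideanSpace ℝ (Fin (m+1)))‖) =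
      ∫⁻ ρ, (Ioi (0:ℝ)).indicator (fun ρ => ENNReal.ofReal κ
        * ENNReal.ofReal (ρ ^ m) * F (x, ρ)) ρ := by
    intro x
    rw [lintegral_indicator measurableSet_Ioi, hκ, ← sphere_const,
      ← lint_norm m (fun ρ => F (x, ρ)) (by fun_prop),
      ← (PiLp.volume_preserving_toLp (Fin (m+1))).lintegral_comp (by fun_prop)]
  have hm : Measurable (fun p : ℝ × ℝ => (Ioi (0:ℝ)).indicator (fun ρ => ENNReal.ofReal κ
        * ENNReal.ofReal (ρ ^ m) * F (p.1, ρ)) p.2) := by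
    have : (fun p : ℝ × ℝ => (Ioi (0:ℝ)).indicator (fun ρ => ENNReal.ofReal κ
        * ENNReal.ofReal (ρ ^ m) * F (p.1, ρ)) p.2) =
        (Prod.snd ⁻¹' (Ioi (0:ℝ))).indicator (fun p : ℝ × ℝ => ENNReal.ofReal κ
        * ENNReal.ofReal (p.2 ^ m) * F p) := by
      ext p; simp [indicator]
    rw [this]
    exact Measurable.indicator (by fun_prop) (measurable_snd measurableSet_Ioi)
  rw [h1, Measure.volume_eq_prod, lintegral_prod _ (by fun_prop)]
  simp only [h2]
  rw [← lintegral_prod (μ := volume) (ν := volume) (fun p : ℝ × ℝ => (Ioi (0:ℝ)).indicator (fun ρ => ENNReal.ofReal κ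
        * ENNReal.ofReal (ρ ^ m) * F (p.1, ρ)) p.2) hm.aemeasurable, ← Measure.volume_eq_prod,
    ← lintegral_comp_polarCoord_symm]
  rw [← lintegral_indicator (measurableSet_Ioi.prod measurableSet_Ioo),
    ← lintegral_indicator polarCoord.open_target.measurableSet]
  congr 1
  ext ⟨r, φ⟩
  simp only [indicator, polarCoord_target, polarCoord_symm_apply, mem_prod, mem_Ioi, mem_Ioo]
  by_cases hr : 0 < r
  swap
  · simp [hr]
  by_cases hφ : 0 < φ ∧ φ < π
  · have hs : 0 < sin φ := sin_pos_of_pos_of_lt_pi hφ.1 hφ.2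
    have : -π < φ := by linarith [pi_pos]
    simp only [hr, hφ, this, and_self, if_true, mul_pos hr hs, smul_eq_mul]
    rw [← ENNReal.ofReal_mul hκ0, ← mul_assoc, ← ENNReal.ofReal_mul hr.le]
    congr 2
    ring
  · simp only [hr, hφ, true_and, if_false]
    split_ifs with h h'
    · exfalso
      have : sin φ ≤ 0 := by
        apply sin_nonpos_of_nonpos_of_neg_pi_le _ h.1.le
        by_contra hc
        exact hφ ⟨not_le.1 hc, h.2⟩
      nlinarith
    · simp
    · rfl

lemma map_cyl (m : ℕ) :
    (volume : Measure (EuclideanSpace ℝ (Fin (m+2)))).map (cyl m) =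
    ((volume.restrict (Ioi (0:ℝ) ×ˢ Ioo 0 π)).withDensity (fun p : ℝ × ℝ =>
      ENNReal.ofReal (2 * √π ^ (m+1) / Gamma ((m+1)/2) * p.1 ^ (m+1) * sin p.2 ^ m))).map
      (fun p => (p.1 * cos p.2, p.1 * sin p.2)) := by
  apply Measure.ext_of_lintegral
  intro F hF
  rw [lintegral_map hF (measurable_cyl m), lint_cyl m F hF, lintegral_map hF (by fun_prop),
    lintegral_withDensity_eq_lintegral_mul _ (by fun_prop) (by fun_prop)]
  rfl

/-- Polar integration for functions of `cyl`. -/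
lemma polar_int (m : ℕ) (f : ℝ × ℝ → ℝ) (hf : Measurable f)
    (hi : Integrable (fun η => f (cyl m η))) :
    ∫ η, f (cyl m η) = ∫ r in Ioi (0:ℝ), ∫ φ in Ioo 0 π,
      (2 * √π ^ (m+1) / Gamma ((m+1)/2) * r ^ (m+1) * sin φ ^ m) * f (r * cos φ, r * sin φ) := by
  have hκ0 : 0 ≤ 2 * √π ^ (m+1) / Gamma (((m:ℝ)+1)/2) := by
    have hg : 0 < Gamma (((m:ℝ)+1)/2) := Gamma_pos_of_pos (by positivity)
    positivity
  have hi' : Integrable f (volume.map (cyl m)) :=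
    (integrable_map_measure hf.aestronglyMeasurable (measurable_cyl m).aemeasurable).2 hi
  have e1 := integral_map (measurable_cyl m).aemeasurable (μ := volume) hf.aestronglyMeasurable
  rw [← e1]
  rw [map_cyl] at hi' ⊢
  rw [integrable_map_measure hf.aestronglyMeasurable (by fun_prop)] at hi'
  rw [integral_map (by fun_prop) hf.aestronglyMeasurable]
  rw [integrable_withDensity_iff_integrable_smul' (by fun_prop) (by simp)] at hi'
  rw [integral_withDensity_eq_integral_toReal_smul (by fun_prop) (by simp)]
  rw [Measure.volume_eq_prod] at hi' ⊢
  refine (setIntegral_prod _ hi').trans ?_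
  refine setIntegral_congr_fun measurableSet_Ioi fun r hr => ?_
  refine setIntegral_congr_fun measurableSet_Ioo fun φ hφ => ?_
  have hr : 0 < r := hr
  have hs : 0 < sin φ := sin_pos_of_pos_of_lt_pi hφ.1 hφ.2
  simp only [smul_eq_mul]
  rw [ENNReal.toReal_ofReal (by positivity)]
  rfl

lemma two_pt_bound {q c u v : ℝ} (hq : q ≤ 0) (hc : 0 < c) (hu : 0 ≤ u) (hv : 0 ≤ v)
    (huv : 2 * c ≤ u + v) :
    u ^ q * v ^ q ≤ u ^ q * (max u c) ^ q + v ^ q * (max v c) ^ q := by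
  have key : ∀ u v : ℝ, 0 ≤ u → 0 ≤ v → 2 * c ≤ u + v → u ≤ v →
      u ^ q * v ^ q ≤ u ^ q * (max u c) ^ q := by
    intro u v hu hv huv h
    have hm : 0 < max u c := lt_max_of_lt_right hc
    have : max u c ≤ v := max_le h (by linarith)
    exact mul_le_mul_of_nonneg_left (rpow_le_rpow_of_nonpos hm this hq) (rpow_nonneg hu _)
  have p1 : 0 ≤ u ^ q * (max u c) ^ q := by positivity
  have p2 : 0 ≤ v ^ q * (max v c) ^ q := by positivity
  rcases le_total u v with h | h
  · linarith [key u v hu hv huv h]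
  · have := key v u hv hu (by linarith) h
    linarith [mul_comm (u ^ q) (v ^ q)]

lemma integrable_radial (m : ℕ) {q c : ℝ} (hc : 0 < c) (hq1 : -((m:ℝ)+2) < q)
    (hq2 : q < -((m:ℝ)+2)/2) :
    Integrable (fun η : EuclideanSpace ℝ (Fin (m+2)) => ‖η‖ ^ q * (max ‖η‖ c) ^ q) := by
  rw [integrable_fun_norm_addHaar (volume : Measure (EuclideanSpace ℝ (Fin (m+2))))
    (f := fun t => t ^ q * (max t c) ^ q)]
  have hdim : Module.finrank ℝ (EuclideanSpace ℝ (Fin (m+2))) - 1 = m + 1 := by simp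
  rw [hdim, ← Ioc_union_Ioi_eq_Ioi hc.le]
  refine IntegrableOn.union ?_ ?_
  · have h : IntegrableOn (fun y : ℝ => y ^ ((m:ℝ) + 1 + q) * c ^ q) (Ioc 0 c) := by
      have := (intervalIntegral.intervalIntegrable_rpow' (a := 0) (b := c)
        (r := (m:ℝ) + 1 + q) (by linarith)).1
      exact this.mul_const _
    refine h.congr_fun (fun y hy => ?_) measurableSet_Ioc
    simp only [smul_eq_mul]
    rw [max_eq_right hy.2, rpow_add hy.1, ← mul_assoc]
    congr 2
    exact_mod_cast rpow_natCast y (m+1)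
  · have h : IntegrableOn (fun y : ℝ => y ^ ((m:ℝ) + 1 + q + q)) (Ioi c) :=
      integrableOn_Ioi_rpow_of_lt (by linarith) hc
    refine h.congr_fun (fun y hy => ?_) measurableSet_Ioi
    have hy' : c < y := hy
    have hy0 : 0 < y := hc.trans hy
    simp only [smul_eq_mul]
    rw [max_eq_left hy'.le, rpow_add hy0, rpow_add hy0, ← mul_assoc]
    congr 2
    exact_mod_cast rpow_natCast y (m+1)

lemma integrable_two_pt (m : ℕ) {q : ℝ} (hq1 : -((m:ℝ)+2) < q)
    (hq2 : q < -((m:ℝ)+2)/2) (ξ : EuclideanSpace ℝ (Fin (m+2))) (hξ : ξ ≠ 0) :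
    Integrable (fun η => ‖η‖ ^ q * ‖ξ - η‖ ^ q) := by
  have hc : 0 < ‖ξ‖ / 2 := by positivity
  have h := integrable_radial m hc hq1 hq2
  have h2 := h.comp_sub_left ξ
  refine (h.add h2).mono' (by fun_prop) (Filter.Eventually.of_forall fun η => ?_)
  rw [norm_of_nonneg (by positivity)]
  have hm : (0:ℝ) ≤ m := Nat.cast_nonneg m
  refine two_pt_bound (by linarith) hc (norm_nonneg _) (norm_nonneg _) ?_
  have : ‖ξ‖ ≤ ‖η‖ + ‖ξ - η‖ := by
    simpa using norm_add_le η (ξ - η)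
  linarith

lemma quad_pos {s : ℝ} (hs : 0 < s) (h1 : s ≠ 1) (φ : ℝ) : 0 < 1 - 2*s*cos φ + s^2 := by
  have : 0 < (1 - s)^2 := by
    have : 1 - s ≠ 0 := fun h => h1 (by linarith)
    positivity
  nlinarith [cos_le_one φ]

lemma fold_angle (m : ℕ) (b s : ℝ) (hs : 0 < s) (h1 : s ≠ 1) :
    ∫ φ in Ioo 0 π, sin φ ^ m * (1 - 2*s*cos φ + s^2) ^ b =
    ∫ φ in Ioo 0 (π/2), sin φ ^ m * ((1 - 2*s*cos φ + s^2) ^ b + (1 + 2*s*cos φ + s^2) ^ b) := by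
  have hc : Continuous (fun φ => sin φ ^ m * (1 - 2*s*cos φ + s^2) ^ b) := by
    refine Continuous.mul (by fun_prop) (Continuous.rpow_const (by fun_prop) fun φ => Or.inl (quad_pos hs h1 φ).ne')
  have e : ∀ φ, sin (π - φ) ^ m * (1 - 2*s*cos (π - φ) + s^2) ^ b =
      sin φ ^ m * (1 + 2*s*cos φ + s^2) ^ b := by
    intro φ
    rw [sin_pi_sub, cos_pi_sub]; congr 2; ring
  have hc2 : Continuous (fun φ => sin φ ^ m * (1 + 2*s*cos φ + s^2) ^ b) := by
    have := hc.comp (by fun_prop : Continuous (fun φ : ℝ => π - φ))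
    simpa only [Function.comp_def, e] using this
  rw [← integral_Ioc_eq_integral_Ioo, ← integral_Ioc_eq_integral_Ioo,
    ← intervalIntegral.integral_of_le pi_pos.le,
    ← intervalIntegral.integral_of_le (by positivity),
    ← intervalIntegral.integral_add_adjacent_intervals (hc.intervalIntegrable 0 (π/2))
      (hc.intervalIntegrable (π/2) π)]
  have := intervalIntegral.integral_comp_sub_left (a := 0) (b := π/2)
    (fun φ => sin φ ^ m * (1 - 2*s*cos φ + s^2) ^ b) π
  simp only [e] at this
  rw [show π - π/2 = π/2 by ring, sub_zero] at this
  rw [← this, ← intervalIntegral.integral_add (hc.intervalIntegrable _ _)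
    (hc2.intervalIntegrable _ _)]
  simp only [mul_add]

lemma norm_cyl (m : ℕ) (η : EuclideanSpace ℝ (Fin (m+2))) :
    ‖η‖ = √((cyl m η).1 ^ 2 + (cyl m η).2 ^ 2) := by
  simp only [cyl]
  rw [EuclideanSpace.norm_eq, EuclideanSpace.norm_eq, sq_sqrt (by positivity), Fin.sum_univ_succ]
  simp

lemma norm_sub_cyl (m : ℕ) (L : ℝ) (η : EuclideanSpace ℝ (Fin (m+2))) :
    ‖EuclideanSpace.single 0 L - η‖ = √((L - (cyl m η).1) ^ 2 + (cyl m η).2 ^ 2) := by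
  simp only [cyl]
  rw [EuclideanSpace.norm_eq, EuclideanSpace.norm_eq, sq_sqrt (by positivity), Fin.sum_univ_succ]
  simp

lemma const_eq (m : ℕ) (γ : ℝ) :
    2 * √π ^ (m+1) / Gamma (((m:ℝ)+1)/2) * cdg (m+2) γ = Cbar (m+2) γ := by
  unfold cdg Cbar
  push_cast
  rw [show ((m:ℝ) + 2 - 1)/2 = ((m:ℝ)+1)/2 by ring,
    show ((m:ℝ) + 2 + 1 - 2*γ)/2 = ((m:ℝ)+2+1)/2 - γ by ring,
    show 2 * (((m:ℝ)+2+1)/2 - γ) - ((m:ℝ)+2)/2 = ((m:ℝ) + 2 + 2 - 4*γ)/2 by ring]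
  have h : √π ^ (m+1) * π ^ (-((m:ℝ)+2)/2) = 1 / √π := by
    rw [sqrt_eq_rpow, ← rpow_natCast, ← rpow_mul pi_pos.le, ← rpow_add pi_pos, one_div (π ^ _),
      ← rpow_neg pi_pos.le]
    congr 1; push_cast; ring
  rw [div_eq_mul_one_div 2 (√π), ← h]
  simp only [div_eq_mul_inv, mul_inv]
  ring

lemma stmt3_aux (m : ℕ) (γ : ℝ)
    (hγ : γ ∈ Set.Ioo (1/2 : ℝ) ((((m+2 : ℕ) : ℝ) + 2)/4))
    (ξ : EuclideanSpace ℝ (Fin (m+2))) (hξ : ξ ≠ 0)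
    (k : ℝ → ℝ) (hk : Measurable k) (hbd : ∃ C : ℝ, ∀ x, |k x| ≤ C) :
    ∫ η, k (‖η‖ / ‖ξ‖) * Hker (m+2) γ η ξ =
      ∫ r in Set.Ioi (0 : ℝ), k r *
        (Cbar (m+2) γ * r ^ (2*γ - 2) *
          ∫ φ in Set.Ioo (0 : ℝ) (Real.pi/2), (Real.sin φ) ^ m *
            ((1 - 2*r*Real.cos φ + r^2) ^ (-((((m+2 : ℕ) : ℝ) + 1)/2 - γ))
              + (1 + 2*r*Real.cos φ + r^2) ^ (-((((m+2 : ℕ) : ℝ) + 1)/2 - γ)))) := by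
  obtain ⟨hγ1, hγ2⟩ := hγ
  obtain ⟨C, hC⟩ := hbd
  set L := ‖ξ‖ with hL
  have hL0 : 0 < L := norm_pos_iff.2 hξ
  set q : ℝ := 2*γ - ((m+2 : ℕ) : ℝ) - 1 with hq
  set e : ℝ := ((m+2 : ℕ) : ℝ) + 2 - 4*γ with he
  push_cast at hq he hγ2
  set ζ : EuclideanSpace ℝ (Fin (m+2)) := EuclideanSpace.single 0 L with hzeta
  have hn : ‖ζ‖ = ‖ξ‖ := by simp [hzeta, hL]
  have hzeta_ne : ζ ≠ 0 := by rw [← norm_pos_iff, hn]; exact hL0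
  set R := Submodule.reflection (ℝ ∙ (ζ - ξ))ᗮ with hR
  have hRξ : R ζ = ξ := Submodule.reflection_sub hn
  set f : ℝ × ℝ → ℝ := fun p => k (√(p.1^2 + p.2^2) / L) *
    (cdg (m+2) γ * √(p.1^2 + p.2^2) ^ q * √((L - p.1)^2 + p.2^2) ^ q * L ^ e) with hf
  have hfm : Measurable f := by fun_prop
  have hfc : ∀ η, f (cyl m η) = k (‖η‖ / L) *
      (cdg (m+2) γ * ‖η‖ ^ q * ‖ζ - η‖ ^ q * L ^ e) := by
    intro η
    simp only [hf]
    rw [norm_sub_cyl, ← norm_cyl]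
  have hint : Integrable (fun η => f (cyl m η)) := by
    have h0 := integrable_two_pt m (q := q) (by linarith) (by linarith) ζ hzeta_ne
    have h1 := h0.const_mul (cdg (m+2) γ * L ^ e)
    have h2 := h1.bdd_mul (f := fun η => k (‖η‖ / L)) (c := C)
      (by exact (hk.comp (by fun_prop)).aestronglyMeasurable) (Filter.Eventually.of_forall fun η => hC _)
    refine h2.congr (Filter.Eventually.of_forall fun η => ?_)
    simp only [hfc]
    ring
  have hA : ∫ η, k (‖η‖ / L) * Hker (m+2) γ η ξ = ∫ η, f (cyl m η) := by
    rw [← R.measurePreserving.integral_comp R.toHomeomorph.measurableEmbedding]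
    refine integral_congr_ae (Filter.Eventually.of_forall fun η => ?_)
    simp only [hfc, Hker]
    have : ‖ξ - R η‖ = ‖ζ - η‖ := by
      rw [← hRξ, ← map_sub, LinearIsometryEquiv.norm_map]
    rw [this, LinearIsometryEquiv.norm_map]
  rw [hA, polar_int m f hfm hint]
  have hsc := integral_comp_mul_left_Ioi' (fun r => ∫ φ in Ioo 0 π,
      (2 * √π ^ (m+1) / Gamma ((m+1)/2) * r ^ (m+1) * sin φ ^ m) * f (r * cos φ, r * sin φ)) 0 hL0
  rw [mul_zero] at hsc
  rw [← hsc, smul_eq_mul, ← integral_const_mul]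
  refine integral_congr_ae ?_
  have hne : ∀ᵐ s : ℝ ∂(volume.restrict (Ioi 0)), s ≠ 1 :=
    ae_restrict_of_ae (by simp [ae_iff])
  filter_upwards [ae_restrict_mem measurableSet_Ioi, hne] with s hs hs1
  have hs : 0 < s := hs
  rw [← fold_angle m _ s hs hs1, ← const_eq, ← integral_const_mul, ← integral_const_mul,
    ← integral_const_mul]
  refine setIntegral_congr_fun measurableSet_Ioo fun φ hφ => ?_
  simp only [hf]
  have e1 : √((L * s * cos φ)^2 + (L * s * sin φ)^2) = L * s := by
    rw [show (L * s * cos φ)^2 + (L * s * sin φ)^2 = (L*s)^2 * (sin φ ^2 + cos φ ^2) by ring,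
      sin_sq_add_cos_sq, mul_one, sqrt_sq (by positivity)]
  have hQ := quad_pos hs hs1 φ
  have e2 : √((L - L * s * cos φ)^2 + (L * s * sin φ)^2) ^ q =
      L ^ q * (1 - 2*s*cos φ + s^2) ^ (-((((m+2 : ℕ) : ℝ) + 1)/2 - γ)) := by
    rw [show (L - L * s * cos φ)^2 + (L * s * sin φ)^2 = L^2 * (1 - 2*s*cos φ + s^2) by
      linear_combination (L^2*s^2) * sin_sq_add_cos_sq φ,
      sqrt_mul (by positivity), sqrt_sq hL0.le, mul_rpow hL0.le (sqrt_nonneg _),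
      sqrt_eq_rpow, ← rpow_mul hQ.le]
    congr 2
    rw [hq]; push_cast; ring
  have e3 : L * L ^ (m+1) * L ^ q * L ^ q * L ^ e = 1 := by
    rw [← pow_succ', ← rpow_natCast, ← rpow_add hL0, ← rpow_add hL0, ← rpow_add hL0,
      ← rpow_zero L]
    congr 1
    rw [hq, he]; push_cast; ring
  have e4 : s ^ (m+1) * s ^ q = s ^ (2*γ - 2) := by
    rw [← rpow_natCast, ← rpow_add hs]
    congr 1
    rw [hq]; push_cast; ring
  rw [e1, e2, mul_div_cancel_left₀ _ hL0.ne', mul_rpow hL0.le hs.le, mul_pow, ← e4]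
  generalize (1 - 2*s*cos φ + s^2) ^ (-((((m+2 : ℕ) : ℝ) + 1)/2 - γ)) = Q
  generalize 2 * √π ^ (m+1) / Gamma (((m:ℝ)+1)/2) = κ
  linear_combination (κ * cdg (m+2) γ * s ^ (m+1) * s ^ q * k s * sin φ ^ m * Q) * e3

theorem stmt3 (d : ℕ) (hd : 2 ≤ d) (γ : ℝ)
    (hγ : γ ∈ Set.Ioo (1/2 : ℝ) (((d : ℝ) + 2)/4))
    (ξ : EuclideanSpace ℝ (Fin d)) (hξ : ξ ≠ 0)
    (k : ℝ → ℝ) (hk : Measurable k) (hbd : ∃ C : ℝ, ∀ x, |k x| ≤ C) :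
    ∫ η, k (‖η‖ / ‖ξ‖) * Hker d γ η ξ =
      ∫ r in Set.Ioi (0 : ℝ), k r *
        (Cbar d γ * r ^ (2*γ - 2) *
          ∫ φ in Set.Ioo (0 : ℝ) (Real.pi/2), (Real.sin φ) ^ (d - 2) *
            ((1 - 2*r*Real.cos φ + r^2) ^ (-(((d : ℝ) + 1)/2 - γ))
              + (1 + 2*r*Real.cos φ + r^2) ^ (-(((d : ℝ) + 1)/2 - γ)))) := by
  obtain ⟨m, rfl⟩ : ∃ m, d = m + 2 := ⟨d - 2, by omega⟩
  exact stmt3_aux m γ hγ ξ hξ k hk hbd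
end

section
/- Let d ≥ 2 be an integer and γ ∈ [(d+3)/6, (d+2)/4). Then for every ξ ∈ ℝ^d \ {0} and every real b > 0, the integral ∫_{ℝ^d} (|η|/|ξ|)^b H(η|ξ) dη (with value in [0,∞]) is strictly greater than 1. -/
open MeasureTheory Set

lemma lint_of_int {X : Type*} [MeasurableSpace X] {μ : Measure X} {f : X → ℝ} {c : ℝ}
    (hf : ∀ᵐ x ∂μ, 0 ≤ f x) (hc : 0 < c) (h : ∫ x, f x ∂μ = c) :
    ∫⁻ x, ENNReal.ofReal (f x) ∂μ = ENNReal.ofReal c := by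
  have hi : Integrable f μ := by
    by_contra hn
    rw [integral_undef hn] at h
    exact hc.ne h
  rw [← ofReal_integral_eq_lintegral_ofReal hi hf, h]

lemma gam {p r : ℝ} (hp : 0 < p) (hr : 0 < r) :
    ∫⁻ t in Ioi (0:ℝ), ENNReal.ofReal (t ^ (p-1) * Real.exp (-(r*t)))
      = ENNReal.ofReal (Real.Gamma p * r ^ (-p)) := by
  apply lint_of_int
  · filter_upwards [ae_restrict_mem measurableSet_Ioi] with t ht
    have : 0 < t := ht
    positivity
  · have := Real.Gamma_pos_of_pos hp
    positivity
  · rw [Real.integral_rpow_mul_exp_neg_mul_Ioi hp hr, one_div, Real.inv_rpow hr.le,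
      Real.rpow_neg hr.le, mul_comm]

lemma gauss (d : ℕ) (ξ : EuclideanSpace ℝ (Fin d)) {t u : ℝ} (ht : 0 < t) (hu : 0 < u) :
    ∫⁻ η : EuclideanSpace ℝ (Fin d),
      ENNReal.ofReal (Real.exp (-(‖η‖^2*t)) * Real.exp (-(‖ξ-η‖^2*u)))
      = ENNReal.ofReal ((Real.pi/(t+u))^((d:ℝ)/2) * Real.exp (-(t*u/(t+u)*‖ξ‖^2))) := by
  have hs : 0 < t + u := by positivity
  have key : ∀ η : EuclideanSpace ℝ (Fin d),
      Real.exp (-(‖η‖^2*t)) * Real.exp (-(‖ξ-η‖^2*u)) =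
      (fun v : EuclideanSpace ℝ (Fin d) => Real.exp (-(t+u)*‖v‖^2) * Real.exp (-(t*u/(t+u)*‖ξ‖^2)))
        (η - (u/(t+u)) • ξ) := by
    intro η
    simp only
    rw [← Real.exp_add, ← Real.exp_add]
    congr 1
    rw [norm_sub_sq_real, norm_sub_sq_real, norm_smul, inner_smul_right, real_inner_comm η ξ,
      Real.norm_of_nonneg (by positivity)]
    field_simp
    ring
  simp_rw [key]
  rw [lintegral_sub_right_eq_self (μ := volume) (fun v : EuclideanSpace ℝ (Fin d) => 
    ENNReal.ofReal (Real.exp (-(t+u)*‖v‖^2) * Real.exp (-(t*u/(t+u)*‖ξ‖^2))))]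
  apply lint_of_int
  · exact Filter.Eventually.of_forall fun v => by positivity
  · positivity
  · rw [integral_mul_const, GaussianFourier.integral_rexp_neg_mul_sq_norm hs]
    simp

lemma beta_half {p q : ℝ} (hp : 0 < p) (hq : 0 < q) :
    ∫⁻ w in Ioi (0:ℝ), ENNReal.ofReal (w ^ (p-1) * (1+w) ^ (-(p+q)))
      = ENNReal.ofReal (Real.Gamma p * Real.Gamma q / Real.Gamma (p+q)) := by
  have hpq : 0 < p + q := by positivity
  have hG := Real.Gamma_pos_of_pos hpq
  have hGp := Real.Gamma_pos_of_pos hp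
  have hGq := Real.Gamma_pos_of_pos hq
  have h1 : ∫⁻ w in Ioi (0:ℝ), ENNReal.ofReal (w ^ (p-1) * (1+w) ^ (-(p+q))) =
      ∫⁻ w in Ioi (0:ℝ), ∫⁻ t in Ioi (0:ℝ), ENNReal.ofReal ((Real.Gamma (p+q))⁻¹ * w ^ (p-1) *
        (t ^ (p+q-1) * Real.exp (-((1+w)*t)))) := by
    apply setLIntegral_congr_fun measurableSet_Ioi
    intro w hw
    have hw : 0 < w := hw
    simp only
    have hk : 0 ≤ (Real.Gamma (p+q))⁻¹ * w ^ (p-1) := by positivity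
    simp_rw [ENNReal.ofReal_mul hk]
    rw [lintegral_const_mul _ (by fun_prop), gam hpq (by positivity), ← ENNReal.ofReal_mul hk]
    congr 1
    field_simp
  rw [h1, lintegral_lintegral_swap (by fun_prop)]
  have h2 : ∫⁻ t in Ioi (0:ℝ), ∫⁻ w in Ioi (0:ℝ), ENNReal.ofReal ((Real.Gamma (p+q))⁻¹ * w ^ (p-1) *
        (t ^ (p+q-1) * Real.exp (-((1+w)*t)))) =
      ∫⁻ t in Ioi (0:ℝ), ENNReal.ofReal ((Real.Gamma (p+q))⁻¹ * Real.Gamma p) * 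
        ENNReal.ofReal (t ^ (q-1) * Real.exp (-(1*t))) := by
    apply setLIntegral_congr_fun measurableSet_Ioi
    intro t ht
    have ht : 0 < t := ht
    simp only
    have hk : 0 ≤ (Real.Gamma (p+q))⁻¹ * t ^ (p+q-1) * Real.exp (-t) := by positivity
    have e : ∀ w : ℝ, (Real.Gamma (p+q))⁻¹ * w ^ (p-1) *
        (t ^ (p+q-1) * Real.exp (-((1+w)*t))) = 
        (Real.Gamma (p+q))⁻¹ * t ^ (p+q-1) * Real.exp (-t) * (w ^ (p-1) * Real.exp (-(t*w))) := by
      intro w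
      rw [show -((1+w)*t) = -t + -(t*w) by ring, Real.exp_add]
      ring
    simp_rw [e, ENNReal.ofReal_mul hk]
    rw [lintegral_const_mul _ (by fun_prop), gam hp ht, ← ENNReal.ofReal_mul hk,
      ← ENNReal.ofReal_mul (by positivity)]
    congr 1
    rw [show q - 1 = (p+q-1) + (-p) by ring, Real.rpow_add ht, one_mul]
    ring
  rw [h2, lintegral_const_mul _ (by fun_prop), gam hq one_pos, ← ENNReal.ofReal_mul (by positivity)]
  congr 1
  rw [Real.one_rpow]
  field_simp

lemma scale_Ioi (f : ℝ → ENNReal) {t : ℝ} (ht : 0 < t) :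
    ∫⁻ u in Ioi (0:ℝ), f u = ∫⁻ w in Ioi (0:ℝ), ENNReal.ofReal t * f (t*w) := by
  have him : (fun w => t * w) '' Ioi (0:ℝ) = Ioi 0 := by
    rw [Set.image_mul_left_Ioi ht, mul_zero]
  conv_lhs => rw [← him]
  rw [lintegral_image_eq_lintegral_abs_deriv_mul (f' := fun _ => t) measurableSet_Ioi]
  · simp [abs_of_pos ht]
  · intro x _
    simpa using ((hasDerivAt_id x).const_mul t).hasDerivWithinAt
  · intro x _ y _ h
    exact mul_left_cancel₀ ht.ne' h

lemma gam_norm {E : Type*} [NormedAddCommGroup E] {a : ℝ} (ha : 0 < a) {x : E} (hx : x ≠ 0)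
    {c : ℝ} (hc : 0 ≤ c) :
    ENNReal.ofReal (c * ‖x‖ ^ (-(2*a))) =
      ∫⁻ t in Ioi (0:ℝ), ENNReal.ofReal (c * (Real.Gamma a)⁻¹ *
        (t ^ (a-1) * Real.exp (-(‖x‖^2*t)))) := by
  have hG := Real.Gamma_pos_of_pos ha
  have hn : 0 < ‖x‖ := norm_pos_iff.mpr hx
  have hk : 0 ≤ c * (Real.Gamma a)⁻¹ := by positivity
  simp_rw [ENNReal.ofReal_mul hk]
  rw [lintegral_const_mul _ (by fun_prop), gam ha (by positivity), ← ENNReal.ofReal_mul hk]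
  congr 1
  rw [← Real.rpow_natCast, ← Real.rpow_mul hn.le]
  field_simp
  congr 1
  push_cast
  ring

lemma riesz (d : ℕ) (hd : 1 ≤ d) (ξ : EuclideanSpace ℝ (Fin d)) (hξ : ξ ≠ 0) {a b : ℝ}
    (ha : 0 < a) (hb : 0 < b) (ha' : a < (d:ℝ)/2) (hb' : b < (d:ℝ)/2) (hab : (d:ℝ)/2 < a + b) :
    ∫⁻ η : EuclideanSpace ℝ (Fin d), ENNReal.ofReal (‖η‖ ^ (-(2*a)) * ‖ξ-η‖ ^ (-(2*b)))
      = ENNReal.ofReal (Real.pi ^ ((d:ℝ)/2) * (Real.Gamma ((d:ℝ)/2-a) * Real.Gamma ((d:ℝ)/2-b) *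
          Real.Gamma (a+b-(d:ℝ)/2)) / (Real.Gamma a * Real.Gamma b * Real.Gamma ((d:ℝ)-a-b))
          * ‖ξ‖ ^ (-(2*(a+b-(d:ℝ)/2)))) := by
  have : Nonempty (Fin d) := ⟨⟨0, hd⟩⟩
  have hGa := Real.Gamma_pos_of_pos ha
  have hGb := Real.Gamma_pos_of_pos hb
  have hn : 0 < ‖ξ‖ := norm_pos_iff.mpr hξ
  set m : ℝ := (d:ℝ)/2 with hm
  have s1 : ∫⁻ η : EuclideanSpace ℝ (Fin d), ENNReal.ofReal (‖η‖ ^ (-(2*a)) * ‖ξ-η‖ ^ (-(2*b))) =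
      ∫⁻ η : EuclideanSpace ℝ (Fin d), ∫⁻ t in Ioi (0:ℝ),
        ENNReal.ofReal (‖ξ-η‖ ^ (-(2*b)) * (Real.Gamma a)⁻¹ *
        (t ^ (a-1) * Real.exp (-(‖η‖^2*t)))) := by
    apply lintegral_congr_ae
    filter_upwards [Measure.ae_ne volume (0 : EuclideanSpace ℝ (Fin d))] with η hη
    rw [mul_comm, gam_norm ha hη (by positivity)]
  have s2 : ∀ t ∈ Ioi (0:ℝ), ∫⁻ η : EuclideanSpace ℝ (Fin d), 
        ENNReal.ofReal (‖ξ-η‖ ^ (-(2*b)) * (Real.Gamma a)⁻¹ *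
        (t ^ (a-1) * Real.exp (-(‖η‖^2*t)))) =
      ∫⁻ w in Ioi (0:ℝ), ENNReal.ofReal ((Real.Gamma a)⁻¹ * (Real.Gamma b)⁻¹ * Real.pi ^ m *
        (w ^ (b-1) * (1+w) ^ (-m)) *
        (t ^ (a+b-m-1) * Real.exp (-(w/(1+w)*‖ξ‖^2*t)))) := by
    intro t ht
    have ht : 0 < t := ht
    have e1 : ∫⁻ η : EuclideanSpace ℝ (Fin d), 
        ENNReal.ofReal (‖ξ-η‖ ^ (-(2*b)) * (Real.Gamma a)⁻¹ *
        (t ^ (a-1) * Real.exp (-(‖η‖^2*t)))) =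
        ∫⁻ η : EuclideanSpace ℝ (Fin d), ∫⁻ u in Ioi (0:ℝ),
          ENNReal.ofReal ((Real.Gamma a)⁻¹ *
        (t ^ (a-1) * Real.exp (-(‖η‖^2*t))) * (Real.Gamma b)⁻¹ *
        (u ^ (b-1) * Real.exp (-(‖ξ-η‖^2*u)))) := by
      apply lintegral_congr_ae
      filter_upwards [Measure.ae_ne volume ξ] with η hη
      rw [← gam_norm hb (sub_ne_zero.mpr hη.symm) (by positivity)]
      congr 1
      ring
    rw [e1, lintegral_lintegral_swap (by fun_prop), scale_Ioi _ ht]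
    apply setLIntegral_congr_fun measurableSet_Ioi
    intro w hw
    have hw : 0 < w := hw
    simp only
    have hk : 0 ≤ (Real.Gamma a)⁻¹ * (Real.Gamma b)⁻¹ * t ^ (a-1) * (t*w) ^ (b-1) := by positivity
    have e2 : ∀ η : EuclideanSpace ℝ (Fin d), (Real.Gamma a)⁻¹ *
        (t ^ (a-1) * Real.exp (-(‖η‖^2*t))) * (Real.Gamma b)⁻¹ *
        ((t*w) ^ (b-1) * Real.exp (-(‖ξ-η‖^2*(t*w)))) = 
        (Real.Gamma a)⁻¹ * (Real.Gamma b)⁻¹ * t ^ (a-1) * (t*w) ^ (b-1) *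
        (Real.exp (-(‖η‖^2*t)) * Real.exp (-(‖ξ-η‖^2*(t*w)))) := by
      intro η; ring
    simp_rw [e2, ENNReal.ofReal_mul hk]
    rw [lintegral_const_mul _ (by fun_prop), gauss d ξ ht (by positivity),
      ← ENNReal.ofReal_mul hk, ← ENNReal.ofReal_mul ht.le]
    congr 1
    have x1 : t * (t*w) / (t + t*w) * ‖ξ‖^2 = w/(1+w)*‖ξ‖^2*t := by
      field_simp
    have x2 : (Real.pi/(t+t*w))^m = Real.pi ^ m * (t ^ (-m) * (1+w) ^ (-m)) := by
      rw [show t + t*w = t*(1+w) by ring, Real.div_rpow Real.pi_pos.le (by positivity),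
        Real.mul_rpow ht.le (by positivity), Real.rpow_neg ht.le, Real.rpow_neg (by positivity)]
      field_simp
    have x3 : t ^ (a+b-m-1) = t * t ^ (a-1) * t ^ (b-1) * t ^ (-m) := by
      rw [show a+b-m-1 = 1 + (a-1) + (b-1) + (-m) by ring, Real.rpow_add ht, Real.rpow_add ht,
        Real.rpow_add ht, Real.rpow_one]
    rw [x1, ← hm, x2, x3, Real.mul_rpow ht.le hw.le]
    ring
  have s3 : ∀ w ∈ Ioi (0:ℝ), ∫⁻ t in Ioi (0:ℝ), 
      ENNReal.ofReal ((Real.Gamma a)⁻¹ * (Real.Gamma b)⁻¹ * Real.pi ^ m *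
        (w ^ (b-1) * (1+w) ^ (-m)) *
        (t ^ (a+b-m-1) * Real.exp (-(w/(1+w)*‖ξ‖^2*t)))) =
      ENNReal.ofReal ((Real.Gamma a)⁻¹ * (Real.Gamma b)⁻¹ * Real.pi ^ m * Real.Gamma (a+b-m) *
        ‖ξ‖ ^ (-(2*(a+b-m)))) * 
        ENNReal.ofReal (w ^ ((m-a)-1) * (1+w) ^ (-((m-a)+(m-b)))) := by
    intro w hw
    have hw : 0 < w := hw
    have hw1 : 0 < 1 + w := by positivity
    have hk : 0 ≤ (Real.Gamma a)⁻¹ * (Real.Gamma b)⁻¹ * Real.pi ^ m *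
        (w ^ (b-1) * (1+w) ^ (-m)) := by positivity
    have hG := Real.Gamma_pos_of_pos (show 0 < a+b-m by linarith)
    simp_rw [ENNReal.ofReal_mul hk]
    rw [lintegral_const_mul _ (by fun_prop), gam (by linarith) (by positivity),
      ← ENNReal.ofReal_mul hk, ← ENNReal.ofReal_mul (by positivity)]
    congr 1
    have x1 : (w/(1+w)*‖ξ‖^2)^(-(a+b-m)) =
        w^(-(a+b-m)) * (1+w)^(a+b-m) * ‖ξ‖ ^ (-(2*(a+b-m))) := by
      rw [Real.mul_rpow (by positivity) (by positivity), Real.div_rpow hw.le hw1.le,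
        Real.rpow_neg hw1.le, div_inv_eq_mul, ← Real.rpow_natCast, ← Real.rpow_mul hn.le]
      congr 2
      push_cast
      ring
    rw [x1, show m - a - 1 = (b-1) + (-(a+b-m)) by ring, Real.rpow_add hw,
      show -((m-a)+(m-b)) = -m + (a+b-m) by ring, Real.rpow_add hw1]
    ring
  rw [s1, lintegral_lintegral_swap (by fun_prop), setLIntegral_congr_fun measurableSet_Ioi s2,
    lintegral_lintegral_swap (by fun_prop), setLIntegral_congr_fun measurableSet_Ioi s3,
    lintegral_const_mul _ (by fun_prop), beta_half (by linarith) (by linarith)]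
  have hG := Real.Gamma_pos_of_pos (show 0 < a+b-m by linarith)
  rw [← ENNReal.ofReal_mul (by positivity)]
  congr 1
  rw [show m - a + (m-b) = (d:ℝ) - a - b by rw [hm]; ring]
  field_simp

/-- pointwise form -/
lemma Hker_pt (d : ℕ) (γ β : ℝ) {η ξ : EuclideanSpace ℝ (Fin d)} (hξ : ξ ≠ 0) (hη : η ≠ 0) :
    (‖η‖ / ‖ξ‖) ^ β * Hker d γ η ξ = cdg d γ * ‖ξ‖ ^ ((d : ℝ) + 2 - 4*γ - β) *
      (‖η‖ ^ (-(2*(((d:ℝ)+1-2*γ-β)/2))) * ‖ξ-η‖ ^ (-(2*(((d:ℝ)+1-2*γ)/2)))) := by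
  have hn : 0 < ‖ξ‖ := norm_pos_iff.mpr hξ
  have hn' : 0 < ‖η‖ := norm_pos_iff.mpr hη
  unfold Hker
  rw [Real.div_rpow hn'.le hn.le, Real.rpow_sub hn _ β,
    show -(2*(((d:ℝ)+1-2*γ-β)/2)) = β + (2*γ - (d:ℝ) - 1) by ring, Real.rpow_add hn',
    show -(2*(((d:ℝ)+1-2*γ)/2)) = 2*γ - (d:ℝ) - 1 by ring]
  field_simp

lemma cdg_pos (d : ℕ) {γ : ℝ} (h1 : 1/2 < γ) (h2 : γ < ((d : ℝ) + 2)/4) : 0 < cdg d γ := by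
  have := Real.Gamma_pos_of_pos (show 0 < 2*γ-1 by linarith)
  have := Real.Gamma_pos_of_pos (show 0 < ((d : ℝ) + 1 - 2*γ)/2 by linarith)
  have := Real.Gamma_pos_of_pos (show 0 < ((d : ℝ) + 2 - 4*γ)/2 by linarith)
  have := Real.Gamma_pos_of_pos (show 0 < (2*γ-1)/2 by linarith)
  unfold cdg
  positivity

lemma phi (d : ℕ) (hd : 1 ≤ d) {γ β : ℝ} (h1 : 1/2 < γ) (h2 : γ < ((d : ℝ) + 2)/4)
    {ξ : EuclideanSpace ℝ (Fin d)} (hξ : ξ ≠ 0) (hβ1 : β < (d:ℝ)+2-4*γ) (hβ2 : 1 - 2*γ < β) :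
    ∫⁻ η, ENNReal.ofReal ((‖η‖ / ‖ξ‖) ^ β * Hker d γ η ξ) =
      ENNReal.ofReal (cdg d γ * (Real.pi ^ ((d:ℝ)/2) * (Real.Gamma ((2*γ-1+β)/2) *
        Real.Gamma ((2*γ-1)/2) * Real.Gamma (((d:ℝ)+2-4*γ-β)/2)) /
        (Real.Gamma (((d:ℝ)+1-2*γ-β)/2) * Real.Gamma (((d:ℝ)+1-2*γ)/2) *
          Real.Gamma (2*γ-1+β/2)))) := by
  have : Nonempty (Fin d) := ⟨⟨0, hd⟩⟩
  have hc := cdg_pos d h1 h2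
  have hn : 0 < ‖ξ‖ := norm_pos_iff.mpr hξ
  have e : ∫⁻ η, ENNReal.ofReal ((‖η‖ / ‖ξ‖) ^ β * Hker d γ η ξ) = 
     ∫⁻ η, ENNReal.ofReal (cdg d γ * ‖ξ‖ ^ ((d : ℝ) + 2 - 4*γ - β)) * ENNReal.ofReal 
      (‖η‖ ^ (-(2*(((d:ℝ)+1-2*γ-β)/2))) * ‖ξ-η‖ ^ (-(2*(((d:ℝ)+1-2*γ)/2)))) := by
    apply lintegral_congr_ae
    filter_upwards [Measure.ae_ne volume (0 : EuclideanSpace ℝ (Fin d))] with η hη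
    rw [Hker_pt d γ β hξ hη, ENNReal.ofReal_mul (by positivity)]
  rw [e, lintegral_const_mul _ (by fun_prop), riesz d hd ξ hξ (by linarith) (by linarith)
    (by linarith) (by linarith) (by linarith), ← ENNReal.ofReal_mul (by positivity)]
  congr 1
  rw [show (d:ℝ)/2 - ((d:ℝ)+1-2*γ-β)/2 = (2*γ-1+β)/2 by ring,
    show (d:ℝ)/2 - ((d:ℝ)+1-2*γ)/2 = (2*γ-1)/2 by ring,
    show ((d:ℝ)+1-2*γ-β)/2 + ((d:ℝ)+1-2*γ)/2 - (d:ℝ)/2 = ((d:ℝ)+2-4*γ-β)/2 by ring,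
    show (d:ℝ) - ((d:ℝ)+1-2*γ-β)/2 - ((d:ℝ)+1-2*γ)/2 = 2*γ-1+β/2 by ring,
    show -(2*(((d:ℝ)+2-4*γ-β)/2)) = -((d:ℝ)+2-4*γ-β) by ring]
  rw [Real.rpow_neg hn.le]
  have : ‖ξ‖ ^ ((d : ℝ) + 2 - 4*γ - β) ≠ 0 := by positivity
  field_simp

lemma phi_zero (d : ℕ) (hd : 1 ≤ d) {γ : ℝ} (h1 : 1/2 < γ) (h2 : γ < ((d : ℝ) + 2)/4)
    {ξ : EuclideanSpace ℝ (Fin d)} (hξ : ξ ≠ 0) :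
    ∫⁻ η, ENNReal.ofReal (Hker d γ η ξ) = 1 := by
  have h := phi d hd (β := 0) h1 h2 hξ (by linarith) (by linarith)
  simp only [Real.rpow_zero, one_mul] at h
  rw [h, ← ENNReal.ofReal_one]
  congr 1
  have := Real.Gamma_pos_of_pos (show 0 < 2*γ-1 by linarith)
  have := Real.Gamma_pos_of_pos (show 0 < ((d : ℝ) + 1 - 2*γ)/2 by linarith)
  have := Real.Gamma_pos_of_pos (show 0 < ((d : ℝ) + 2 - 4*γ)/2 by linarith)
  have := Real.Gamma_pos_of_pos (show 0 < (2*γ-1)/2 by linarith)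
  have hp : 0 < Real.pi ^ ((d:ℝ)/2) := by positivity
  unfold cdg
  rw [neg_div, Real.rpow_neg Real.pi_pos.le]
  simp only [add_zero, sub_zero, zero_div]
  generalize Real.Gamma (((d : ℝ) + 2 - 4*γ)/2) = x1 at *
  generalize Real.Gamma (((d : ℝ) + 1 - 2*γ)/2) = x2 at *
  generalize Real.Gamma ((2*γ-1)/2) = x3 at *
  generalize Real.Gamma (2*γ-1) = x4 at *
  field_simp

lemma phi_symm (d : ℕ) (hd : 1 ≤ d) {γ β : ℝ} (h1 : 1/2 < γ) (h2 : γ < ((d : ℝ) + 2)/4)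
    {ξ : EuclideanSpace ℝ (Fin d)} (hξ : ξ ≠ 0) (hβ1 : β < (d:ℝ)+2-4*γ) (hβ2 : 1 - 2*γ < β) :
    ∫⁻ η, ENNReal.ofReal ((‖η‖ / ‖ξ‖) ^ ((d:ℝ)-3*(2*γ-1)-β) * Hker d γ η ξ) =
    ∫⁻ η, ENNReal.ofReal ((‖η‖ / ‖ξ‖) ^ β * Hker d γ η ξ) := by
  rw [phi d hd h1 h2 hξ hβ1 hβ2, phi d hd h1 h2 hξ (by linarith) (by linarith)]
  rw [show (2*γ-1+((d:ℝ)-3*(2*γ-1)-β))/2 = ((d:ℝ)+2-4*γ-β)/2 by ring,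
   show ((d:ℝ)+2-4*γ-((d:ℝ)-3*(2*γ-1)-β))/2 = (2*γ-1+β)/2 by ring,
   show ((d:ℝ)+1-2*γ-((d:ℝ)-3*(2*γ-1)-β))/2 = 2*γ-1+β/2 by ring,
   show 2*γ-1+((d:ℝ)-3*(2*γ-1)-β)/2 = ((d:ℝ)+1-2*γ-β)/2 by ring]
  congr 1
  ring

lemma pt_strict {r p q : ℝ} (hr : 0 < r) (hr1 : r ≠ 1) (hp : 0 < p) (hq : 0 < q) :
    p + q < p * r ^ (-q) + q * r ^ p := by
  have hl : Real.log r ≠ 0 := Real.log_ne_zero_of_pos_of_ne_one hr hr1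
  rw [Real.rpow_def_of_pos hr, Real.rpow_def_of_pos hr]
  have a1 := Real.add_one_lt_exp (mul_ne_zero hl (neg_ne_zero.mpr hq.ne'))
  have a2 := Real.add_one_lt_exp (mul_ne_zero hl hp.ne')
  nlinarith [mul_lt_mul_of_pos_left a1 hp, mul_lt_mul_of_pos_left a2 hq]

lemma Hker_meas (d : ℕ) (γ β : ℝ) (ξ : EuclideanSpace ℝ (Fin d)) :
    Measurable fun η => (‖η‖ / ‖ξ‖) ^ β * Hker d γ η ξ := by
  unfold Hker
  fun_prop

lemma Hker_meas' (d : ℕ) (γ : ℝ) (ξ : EuclideanSpace ℝ (Fin d)) :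
    Measurable fun η => Hker d γ η ξ := by
  unfold Hker
  fun_prop

lemma small (d : ℕ) (hd : 2 ≤ d) (γ : ℝ)
    (hγ : γ ∈ Set.Ico (((d : ℝ) + 3)/6) (((d : ℝ) + 2)/4))
    (ξ : EuclideanSpace ℝ (Fin d)) (hξ : ξ ≠ 0) (b : ℝ) (hb : 0 < b) (hb' : b < (d:ℝ)+2-4*γ) :
    1 < ∫⁻ η, ENNReal.ofReal ((‖η‖ / ‖ξ‖) ^ b * Hker d γ η ξ) := by
  have : Nonempty (Fin d) := ⟨⟨0, by omega⟩⟩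
  obtain ⟨hg1, hg2⟩ := hγ
  have hdr : (2:ℝ) ≤ d := by exact_mod_cast hd
  have h1 : 1/2 < γ := by linarith
  have hn : 0 < ‖ξ‖ := norm_pos_iff.mpr hξ
  have hc := cdg_pos d h1 hg2
  have hs := phi_symm d (by omega) h1 hg2 hξ hb' (by linarith)
  set q : ℝ := 3*(2*γ-1) - d + b with hq
  have hq0 : 0 < q := by linarith
  rw [show (d:ℝ)-3*(2*γ-1)-b = -q by rw [hq]; ring] at hs
  have h0 := phi_zero d (by omega) h1 hg2 hξ
  have hlt : ∫⁻ η, ENNReal.ofReal (b+q) * ENNReal.ofReal (Hker d γ η ξ) <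
      ∫⁻ η, (ENNReal.ofReal b * ENNReal.ofReal ((‖η‖ / ‖ξ‖) ^ (-q) * Hker d γ η ξ) +
       ENNReal.ofReal q * ENNReal.ofReal ((‖η‖ / ‖ξ‖) ^ b * Hker d γ η ξ)) := by
    apply lintegral_strict_mono
    · exact NeZero.ne _
    · exact (((Hker_meas d γ (-q) ξ).ennreal_ofReal.const_mul _).add
        ((Hker_meas d γ b ξ).ennreal_ofReal.const_mul _)).aemeasurable
    · rw [lintegral_const_mul _ (Hker_meas' d γ ξ).ennreal_ofReal, h0]
      simp
    · have hsph : ∀ᵐ η : EuclideanSpace ℝ (Fin d), η ∉ Metric.sphere 0 ‖ξ‖ :=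
        measure_eq_zero_iff_ae_notMem.mp (Measure.addHaar_sphere _ _ _)
      filter_upwards [Measure.ae_ne volume (0 : EuclideanSpace ℝ (Fin d)),
        Measure.ae_ne volume ξ, hsph] with η hη0 hηξ hη
      have hn' : 0 < ‖η‖ := norm_pos_iff.mpr hη0
      have hn'' : 0 < ‖ξ - η‖ := norm_pos_iff.mpr (sub_ne_zero.mpr hηξ.symm)
      have hH : 0 < Hker d γ η ξ := by unfold Hker; positivity
      have hr1 : ‖η‖ / ‖ξ‖ ≠ 1 := by
        intro h
        rw [div_eq_one_iff_eq hn.ne'] at h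
        exact hη (by simpa using h)
      rw [← ENNReal.ofReal_mul (by positivity), ← ENNReal.ofReal_mul (by positivity),
        ← ENNReal.ofReal_mul (by positivity), ← ENNReal.ofReal_add (by positivity) (by positivity)]
      apply (ENNReal.ofReal_lt_ofReal_iff (by positivity)).mpr
      have := mul_lt_mul_of_pos_right (pt_strict (div_pos hn' hn) hr1 hb hq0) hH
      linarith
  rw [lintegral_const_mul _ (Hker_meas' d γ ξ).ennreal_ofReal, h0,
    lintegral_add_left ((Hker_meas d γ (-q) ξ).ennreal_ofReal.const_mul _),
    lintegral_const_mul _ (Hker_meas d γ (-q) ξ).ennreal_ofReal,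
    lintegral_const_mul _ (Hker_meas d γ b ξ).ennreal_ofReal, hs, ← add_mul,
    ← ENNReal.ofReal_add hb.le hq0.le] at hlt
  exact lt_of_mul_lt_mul_left' hlt

theorem stmt6 (d : ℕ) (hd : 2 ≤ d) (γ : ℝ)
    (hγ : γ ∈ Set.Ico (((d : ℝ) + 3)/6) (((d : ℝ) + 2)/4))
    (ξ : EuclideanSpace ℝ (Fin d)) (hξ : ξ ≠ 0) (b : ℝ) (hb : 0 < b) :
    1 < ∫⁻ η, ENNReal.ofReal ((‖η‖ / ‖ξ‖) ^ b * Hker d γ η ξ) := by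
  have hg1 := hγ.1
  have hg2 := hγ.2
  have hdr : (2:ℝ) ≤ d := by exact_mod_cast hd
  have h1 : 1/2 < γ := by linarith
  have hc := cdg_pos d h1 hg2
  have hM : 0 < (d:ℝ)+2-4*γ := by linarith
  obtain ⟨b', hb'0, hb'M, hb'b⟩ : ∃ b' : ℝ, 0 < b' ∧ b' < (d:ℝ)+2-4*γ ∧ b' ≤ b :=
    ⟨min b (((d:ℝ)+2-4*γ)/2), by positivity, (min_le_right _ _).trans_lt (by linarith),
      min_le_left _ _⟩
  have hsm := small d hd γ hγ ξ hξ b' hb'0 hb'M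
  set X := ∫⁻ η, ENNReal.ofReal ((‖η‖ / ‖ξ‖) ^ b' * Hker d γ η ξ) with hX
  set k : ℝ := b / b' with hk
  have hk1 : 1 ≤ k := (one_le_div hb'0).mpr hb'b
  have h0 := phi_zero d (by omega) h1 hg2 hξ
  have hle : ∫⁻ η, ENNReal.ofReal k * ENNReal.ofReal ((‖η‖ / ‖ξ‖) ^ b' * Hker d γ η ξ) ≤
      ∫⁻ η, (ENNReal.ofReal ((‖η‖ / ‖ξ‖) ^ b * Hker d γ η ξ) +
        ENNReal.ofReal (k-1) * ENNReal.ofReal (Hker d γ η ξ)) := by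
    apply lintegral_mono
    intro η
    have hH : 0 ≤ Hker d γ η ξ := by unfold Hker; positivity
    have hk0 : 0 ≤ k - 1 := by linarith
    simp only
    rw [← ENNReal.ofReal_mul (by positivity), ← ENNReal.ofReal_mul hk0,
      ← ENNReal.ofReal_add (by positivity) (by positivity)]
    apply ENNReal.ofReal_le_ofReal
    have hr : 0 ≤ ‖η‖ / ‖ξ‖ := by positivity
    have hb0 : 0 ≤ (‖η‖ / ‖ξ‖) ^ b' := by positivity
    have hB := one_add_mul_self_le_rpow_one_add (s := (‖η‖ / ‖ξ‖) ^ b' - 1) (by linarith) hk1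
    rw [add_sub_cancel, ← Real.rpow_mul hr, show b' * k = b by rw [hk]; field_simp] at hB
    nlinarith [mul_le_mul_of_nonneg_right hB hH]
  rw [lintegral_const_mul _ (Hker_meas d γ b' ξ).ennreal_ofReal, 
    lintegral_add_left (Hker_meas d γ b ξ).ennreal_ofReal,
    lintegral_const_mul _ (Hker_meas' d γ ξ).ennreal_ofReal, h0, mul_one, ← hX] at hle
  by_contra hcon
  rw [not_lt] at hcon
  have h3 : ENNReal.ofReal k * X ≤ ENNReal.ofReal k * 1 := by
    refine hle.trans ((add_le_add_left hcon _).trans ?_)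
    rw [← ENNReal.ofReal_one, ← ENNReal.ofReal_add zero_le_one (by linarith), 
      ← ENNReal.ofReal_mul (by linarith)]
    apply le_of_eq
    congr 1
    ring
  have h4 := (ENNReal.mul_le_mul_iff_right (by simp; linarith) ENNReal.ofReal_ne_top).mp h3
  exact absurd hsm (not_lt.mpr h4)
end

section
/- Let γ ∈ (1/2,1) and c₀ = 1/(2π). Suppose v : (ℝ² \ {0}) × [0,∞) → [0,∞] is measurable, v₀(ξ) = v(ξ,0), and v satisfies for all ξ ≠ 0 and t ≥ 0: v(ξ,t) = v₀(ξ) e^{−|ξ|^{2γ}t} + (c₀/2) ∫_0^t ∫_{ℝ²} |ξ| e^{−|ξ|^{2γ}s} v(η,t−s) v(ξ−η,t−s) |sin(θ(ξ,η) − θ(ξ,ξ−η))| dη ds. Suppose there exists a measurable set A ⊆ ℝ² with positive Lebesgue measure such that v₀(ξ) > 0 for almost every ξ ∈ A ∪ (−A), and suppose there exists τ > 0 such that the set {ξ ∈ ℝ² : v(ξ,τ) = ∞} has positive Lebesgue measure. Then v(ξ,t) = ∞ for every ξ ∈ ℝ² \ {0} and every t > τ. -/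
open MeasureTheory Set ENNReal

/-- The mild scalar integral equation satisfied by the expected magnitude of the 2D
fractional Navier–Stokes solution process (with `c₀ = 1/(2π)`), in `[0,∞]`-valued form. -/
def Solves2D (γ : ℝ) (v : EuclideanSpace ℝ (Fin 2) → ℝ → ℝ≥0∞) : Prop :=
  ∀ ξ : EuclideanSpace ℝ (Fin 2), ξ ≠ 0 → ∀ t : ℝ, 0 ≤ t →
    v ξ t = ENNReal.ofReal (Real.exp (-(‖ξ‖ ^ (2*γ)) * t)) * v ξ 0 +
      ∫⁻ s in Set.Ioc (0:ℝ) t, ∫⁻ η : EuclideanSpace ℝ (Fin 2),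
        ENNReal.ofReal ((1/(2*Real.pi))/2 * ‖ξ‖ * Real.exp (-(‖ξ‖ ^ (2*γ)) * s)
            * |Real.sin (InnerProductGeometry.angle ξ η
                - InnerProductGeometry.angle ξ (ξ - η))|)
          * (v η (t - s) * v (ξ - η) (t - s))

abbrev E2 := EuclideanSpace ℝ (Fin 2)

theorem kernel_geom {ξ η : E2} (hξ : ξ ≠ 0)
    (h : Real.sin (InnerProductGeometry.angle ξ η
                - InnerProductGeometry.angle ξ (ξ - η)) = 0) :
    η ∈ (Submodule.span ℝ {ξ} : Submodule ℝ E2) ∨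
      η ∈ (AffineSubspace.perpBisector (0 : E2) ξ) := by
  by_cases hs : Real.sin (InnerProductGeometry.angle ξ η) = 0
  · left
    rw [InnerProductGeometry.sin_eq_zero_iff_angle_eq_zero_or_angle_eq_pi] at hs
    rw [Submodule.mem_span_singleton]
    rcases hs with hs | hs
    · obtain ⟨_, r, _, hr⟩ := InnerProductGeometry.angle_eq_zero_iff.1 hs
      exact ⟨r, hr.symm⟩
    · obtain ⟨_, r, _, hr⟩ := InnerProductGeometry.angle_eq_pi_iff.1 hs
      exact ⟨r, hr.symm⟩
  · right
    rw [AffineSubspace.mem_perpBisector_iff_dist_eq, dist_zero_right, dist_comm, dist_eq_norm]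
    have c1 := InnerProductGeometry.cos_angle_mul_norm_mul_norm ξ η
    have c2 := InnerProductGeometry.cos_angle_mul_norm_mul_norm ξ (ξ - η)
    have s1 := Real.sin_sq_add_cos_sq (InnerProductGeometry.angle ξ η)
    have p1 := InnerProductGeometry.angle_nonneg ξ η
    have p2 := InnerProductGeometry.angle_le_pi ξ η
    have q1 := InnerProductGeometry.angle_nonneg ξ (ξ - η)
    have q2 := InnerProductGeometry.angle_le_pi ξ (ξ - η)
    have hθ : InnerProductGeometry.angle ξ η = InnerProductGeometry.angle ξ (ξ - η) := by
      have a1 : 0 < InnerProductGeometry.angle ξ η := lt_of_le_of_ne p1 (by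
        intro h0; rw [← h0] at hs; simp at hs)
      have a2 : InnerProductGeometry.angle ξ η < Real.pi := lt_of_le_of_ne p2 (by
        intro h0; rw [h0] at hs; simp at hs)
      have := (Real.sin_eq_zero_iff_of_lt_of_lt (by linarith) (by linarith)).1 h
      linarith
    rw [← hθ] at c2
    have hn : ‖ξ - η‖ ^ 2 = ‖ξ‖ ^ 2 - 2 * inner ℝ ξ η + ‖η‖ ^ 2 := norm_sub_sq_real ξ η
    rw [inner_sub_right, real_inner_self_eq_norm_sq] at c2
    set k := Real.cos (InnerProductGeometry.angle ξ η)
    set σ := Real.sin (InnerProductGeometry.angle ξ η)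
    have hξ' : 0 < ‖ξ‖ := norm_pos_iff.2 hξ
    have key : (σ ^ 2 * ‖ξ‖ ^ 2) * ‖η‖ ^ 2 = (σ ^ 2 * ‖ξ‖ ^ 2) * ‖ξ - η‖ ^ 2 := by
      have e : σ ^ 2 = 1 - k ^ 2 := by linarith
      have f1 : (1 - k ^ 2) * ‖ξ‖ ^ 2 * ‖η‖ ^ 2 = ‖ξ‖ ^ 2 * ‖η‖ ^ 2 - (inner ℝ ξ η) ^ 2 := by
        rw [← c1]; ring
      have f2 : (1 - k ^ 2) * ‖ξ‖ ^ 2 * ‖ξ - η‖ ^ 2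
          = ‖ξ‖ ^ 2 * ‖ξ - η‖ ^ 2 - (‖ξ‖ ^ 2 - inner ℝ ξ η) ^ 2 := by
        rw [← c2]; ring
      rw [e, f1, f2, hn]; ring
    have hne : σ ^ 2 * ‖ξ‖ ^ 2 ≠ 0 := by positivity
    have := mul_left_cancel₀ hne key
    exact (sq_eq_sq₀ (norm_nonneg _) (norm_nonneg _)).1 this

theorem kernel_ae {ξ : E2} (hξ : ξ ≠ 0) :
    ∀ᵐ η : E2, Real.sin (InnerProductGeometry.angle ξ η
                - InnerProductGeometry.angle ξ (ξ - η)) ≠ 0 := by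
  have h1 : volume ((Submodule.span ℝ {ξ} : Submodule ℝ E2) : Set E2) = 0 := by
    apply Measure.addHaar_submodule
    intro h
    have h1 := finrank_span_singleton (K := ℝ) hξ
    rw [h, finrank_top, finrank_euclideanSpace_fin] at h1
    omega
  have h2 : volume ((AffineSubspace.perpBisector (0 : E2) ξ) : Set E2) = 0 := by
    apply Measure.addHaar_affineSubspace
    intro h
    exact hξ (AffineSubspace.perpBisector_eq_top.1 h).symm
  filter_upwards [measure_eq_zero_iff_ae_notMem.1 h1, measure_eq_zero_iff_ae_notMem.1 h2]
    with η a b h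
  rcases kernel_geom hξ h with h | h
  · exact a h
  · exact b h

theorem coef_ae (γ : ℝ) {ξ : E2} (hξ : ξ ≠ 0) :
    ∀ᵐ η : E2, ∀ s : ℝ, 0 < ENNReal.ofReal ((1/(2*Real.pi))/2 * ‖ξ‖ * Real.exp (-(‖ξ‖ ^ (2*γ)) * s)
            * |Real.sin (InnerProductGeometry.angle ξ η
                - InnerProductGeometry.angle ξ (ξ - η))|) := by
  filter_upwards [kernel_ae hξ] with η h s
  have hξ' : 0 < ‖ξ‖ := norm_pos_iff.2 hξ
  have := abs_pos.2 h
  have := Real.pi_pos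
  rw [ENNReal.ofReal_pos]
  positivity

theorem meas_integrand (γ : ℝ) (v : E2 → ℝ → ℝ≥0∞)
    (hmeas : Measurable (Function.uncurry v)) (ξ : E2) (t : ℝ) :
    Measurable (fun p : ℝ × E2 =>
        ENNReal.ofReal ((1/(2*Real.pi))/2 * ‖ξ‖ * Real.exp (-(‖ξ‖ ^ (2*γ)) * p.1)
            * |Real.sin (InnerProductGeometry.angle ξ p.2
                - InnerProductGeometry.angle ξ (ξ - p.2))|)
          * (v p.2 (t - p.1) * v (ξ - p.2) (t - p.1))) := by
  have m1 : Measurable (fun p : ℝ × E2 => v p.2 (t - p.1)) :=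
    hmeas.comp (f := fun p : ℝ × E2 => (p.2, t - p.1)) (by fun_prop)
  have m2 : Measurable (fun p : ℝ × E2 => v (ξ - p.2) (t - p.1)) :=
    hmeas.comp (f := fun p : ℝ × E2 => (ξ - p.2, t - p.1)) (by fun_prop)
  have m3 : Measurable (fun η : E2 => InnerProductGeometry.angle ξ η) := by
    unfold InnerProductGeometry.angle
    exact Real.measurable_arccos.comp (by fun_prop)
  have m4 : Measurable (fun p : ℝ × E2 => InnerProductGeometry.angle ξ p.2) :=
    m3.comp measurable_snd
  have m5 : Measurable (fun p : ℝ × E2 => InnerProductGeometry.angle ξ (ξ - p.2)) :=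
    m3.comp (f := fun p : ℝ × E2 => ξ - p.2) (by fun_prop)
  have m6 : Measurable (fun p : ℝ × E2 => |Real.sin (InnerProductGeometry.angle ξ p.2
                - InnerProductGeometry.angle ξ (ξ - p.2))|) :=
    (Real.measurable_sin.comp (m4.sub m5)).abs
  refine Measurable.mul (ENNReal.measurable_ofReal.comp ?_) (m1.mul m2)
  exact Measurable.mul (by fun_prop) m6

theorem pos_of_set (γ : ℝ) (v : E2 → ℝ → ℝ≥0∞)
    (hmeas : Measurable (Function.uncurry v)) (heq : Solves2D γ v)
    {ξ : E2} (hξ : ξ ≠ 0) {t : ℝ} (ht : 0 < t) (W : Set E2) (hW : volume W ≠ 0)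
    (h : ∀ s, 0 < s → ∀ᵐ η : E2, η ∈ W → 0 < v η s ∧ 0 < v (ξ - η) s) : 0 < v ξ t := by
  rw [heq ξ hξ t ht.le]
  refine lt_of_lt_of_le ?_ le_add_self
  have hm := meas_integrand γ v hmeas ξ t
  rw [setLIntegral_pos_iff hm.lintegral_prod_right']
  refine lt_of_lt_of_le ?_ (measure_mono (s := Ioo 0 t) ?_)
  · simp [ht]
  · intro s hs
    refine ⟨?_, hs.1, hs.2.le⟩
    rw [Function.mem_support]
    intro h0
    replace h0 := (lintegral_eq_zero_iff (hm.comp measurable_prodMk_left)).1 h0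
    apply hW
    rw [measure_eq_zero_iff_ae_notMem]
    filter_upwards [h0, coef_ae γ hξ, h (t - s) (by linarith [hs.2])] with η a b c hη
    obtain ⟨c1, c2⟩ := c hη
    have := b s
    simp only [Pi.zero_apply, Function.comp] at a
    exact (ENNReal.mul_pos this.ne' (ENNReal.mul_pos c1.ne' c2.ne').ne').ne' a

theorem persist (γ : ℝ) (v : E2 → ℝ → ℝ≥0∞) (heq : Solves2D γ v)
    {ξ : E2} (hξ : ξ ≠ 0) {t d : ℝ} (ht : 0 ≤ t) (hd : 0 ≤ d) :
    ENNReal.ofReal (Real.exp (-(‖ξ‖ ^ (2*γ)) * d)) * v ξ t ≤ v ξ (t + d) := by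
  rw [heq ξ hξ t ht, heq ξ hξ (t + d) (by linarith), mul_add]
  refine add_le_add ?_ ?_
  · rw [← mul_assoc, ← ENNReal.ofReal_mul (Real.exp_nonneg _), ← Real.exp_add]
    apply le_of_eq; congr 3; ring
  · rw [← lintegral_const_mul' _ _ ENNReal.ofReal_ne_top]
    set G : ℝ → ℝ≥0∞ := fun s => ∫⁻ η : E2,
        ENNReal.ofReal ((1/(2*Real.pi))/2 * ‖ξ‖ * Real.exp (-(‖ξ‖ ^ (2*γ)) * s)
            * |Real.sin (InnerProductGeometry.angle ξ η
                - InnerProductGeometry.angle ξ (ξ - η))|)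
          * (v η (t + d - s) * v (ξ - η) (t + d - s)) with hG
    have e1 : ∫⁻ s in Ioc d (t + d), G s = ∫⁻ s in Ioc 0 t, G (s + d) := by
      rw [← lintegral_indicator measurableSet_Ioc, ← lintegral_indicator measurableSet_Ioc,
        ← lintegral_add_right_eq_self _ d]
      congr 1; ext s
      simp only [indicator, mem_Ioc]
      congr 1
      simp
    calc _ ≤ ∫⁻ s in Ioc 0 t, G (s + d) := by
          refine lintegral_mono fun s => ?_
          simp only [hG]
          rw [← lintegral_const_mul' _ _ ENNReal.ofReal_ne_top]
          refine lintegral_mono fun η => ?_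
          rw [← mul_assoc, ← ENNReal.ofReal_mul (Real.exp_nonneg _)]
          have : t + d - (s + d) = t - s := by ring
          rw [this]
          apply le_of_eq
          congr 2
          rw [mul_add, Real.exp_add]; ring
      _ = ∫⁻ s in Ioc d (t + d), G s := e1.symm
      _ ≤ _ := lintegral_mono_set (Ioc_subset_Ioc_left hd)

open scoped Pointwise in
theorem pos_all (γ : ℝ) (v : E2 → ℝ → ℝ≥0∞)
    (hmeas : Measurable (Function.uncurry v)) (heq : Solves2D γ v)
    (A : Set E2) (hA : MeasurableSet A) (hApos : 0 < volume A)
    (hv₀ : ∀ᵐ ξ : E2, ξ ∈ A ∪ (-A) → 0 < v ξ 0) :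
    ∀ ξ : E2, ξ ≠ 0 → ∀ t : ℝ, 0 < t → 0 < v ξ t := by
  have ne0 : ∀ᵐ ξ : E2, ξ ≠ 0 := by simp [ae_iff]
  have hs : ∀ s, 0 < s → ∀ᵐ ξ : E2, ξ ∈ A ∪ (-A) → 0 < v ξ s := by
    intro s hs
    filter_upwards [hv₀, ne0] with ξ h h0 hξ
    have := persist γ v heq h0 le_rfl hs.le
    rw [zero_add] at this
    refine lt_of_lt_of_le (ENNReal.mul_pos ?_ (h hξ).ne') this
    exact (ENNReal.ofReal_pos.2 (Real.exp_pos _)).ne'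
  obtain ⟨K, hKA, hK, hKpos⟩ := hA.exists_lt_isCompact hApos
  have ev := eventually_nhds_zero_measure_vadd_sdiff_lt hK hK.isClosed hKpos.ne' (μ := volume)
  obtain ⟨r, hr, hball⟩ := Metric.eventually_nhds_iff.1 ev
  have step0 : ∀ ξ : E2, ξ ≠ 0 → ‖ξ‖ < r → ∀ t : ℝ, 0 < t → 0 < v ξ t := by
    intro ξ hξ hξr t ht
    have hlt := hball (y := ξ) (by simpa using hξr)
    refine pos_of_set γ v hmeas heq hξ ht ((ξ +ᵥ K) ∩ K) ?_ ?_
    · intro h0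
      have := measure_le_inter_add_sdiff volume (ξ +ᵥ K) K
      rw [h0, zero_add, measure_vadd] at this
      exact absurd this (not_le.2 hlt)
    · intro s hs0
      have q := (Measure.measurePreserving_sub_left (volume : Measure E2) ξ).quasiMeasurePreserving.ae (hs s hs0)
      filter_upwards [hs s hs0, q] with η a b hη
      refine ⟨a (Or.inl (hKA hη.2)), b (Or.inr ?_)⟩
      obtain ⟨⟨x, hx, hxe⟩, _⟩ := hη
      have : η = ξ + x := hxe.symm
      rw [this]
      simpa using hKA hx
  have step : ∀ n : ℕ, ∀ ξ : E2, ξ ≠ 0 → ‖ξ‖ < 2 ^ n * r → ∀ t : ℝ, 0 < t → 0 < v ξ t := by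
    intro n
    induction n with
    | zero => simpa using step0
    | succ n ih =>
      intro ξ hξ hξr t ht
      set R := 2 ^ n * r with hR
      have hRR : ‖ξ‖ < 2 * R := by rw [hR]; rw [pow_succ] at hξr; linarith
      refine pos_of_set γ v hmeas heq hξ ht (Metric.ball 0 R ∩ Metric.ball ξ R) ?_ ?_
      · refine ((Metric.isOpen_ball.inter Metric.isOpen_ball).measure_pos _ ?_).ne'
        refine ⟨(1/2 : ℝ) • ξ, ?_, ?_⟩
        · rw [mem_ball_zero_iff, norm_smul]; norm_num; linarith
        · rw [mem_ball_iff_norm]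
          have : (1/2 : ℝ) • ξ - ξ = (-(1/2) : ℝ) • ξ := by module
          rw [this, norm_smul]; norm_num; linarith
      · intro s hs0
        have q := (Measure.measurePreserving_sub_left (volume : Measure E2) ξ).quasiMeasurePreserving.ae ne0
        filter_upwards [ne0, q] with η a b hη
        refine ⟨ih η a (by simpa using hη.1) s hs0, ih _ b ?_ s hs0⟩
        have := hη.2
        rwa [mem_ball_iff_norm, norm_sub_rev] at this
  intro ξ hξ t ht
  obtain ⟨n, hn⟩ := pow_unbounded_of_one_lt (‖ξ‖ / r) (one_lt_two : (1:ℝ) < 2)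
  exact step n ξ hξ ((div_lt_iff₀ hr).1 hn) t ht

theorem stmt15 (γ : ℝ) (hγ : γ ∈ Set.Ioo (1/2 : ℝ) 1)
    (v : EuclideanSpace ℝ (Fin 2) → ℝ → ℝ≥0∞)
    (hmeas : Measurable (Function.uncurry v))
    (heq : Solves2D γ v)
    (A : Set (EuclideanSpace ℝ (Fin 2))) (hA : MeasurableSet A) (hApos : 0 < volume A)
    (hv₀ : ∀ᵐ ξ : EuclideanSpace ℝ (Fin 2), ξ ∈ A ∪ (-A) → 0 < v ξ 0)
    (τ : ℝ) (hτ : 0 < τ)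
    (hblow : 0 < volume {ξ : EuclideanSpace ℝ (Fin 2) | v ξ τ = ⊤}) :
    ∀ ξ : EuclideanSpace ℝ (Fin 2), ξ ≠ 0 → ∀ t : ℝ, τ < t → v ξ t = ⊤ := by
  intro ξ hξ t ht
  have hpos := pos_all γ v hmeas heq A hA hApos hv₀
  have ne0 : ∀ᵐ ξ : E2, ξ ≠ 0 := by simp [ae_iff]
  have q := (Measure.measurePreserving_sub_left (volume : Measure E2) ξ).quasiMeasurePreserving.ae ne0
  set S := {ξ : E2 | v ξ τ = ⊤} with hS
  have hSm : MeasurableSet S := by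
    have : Measurable fun ξ : E2 => v ξ τ :=
      hmeas.comp (f := fun ξ : E2 => (ξ, τ)) (by fun_prop)
    exact this (measurableSet_singleton ⊤)
  rw [heq ξ hξ t (by linarith), ← top_le_iff]
  refine le_trans ?_ le_add_self
  calc (⊤ : ℝ≥0∞) = ∫⁻ s in Ioc (0:ℝ) (t - τ), ⊤ := by
        rw [setLIntegral_const, ENNReal.top_mul]
        simp [ht]
    _ ≤ ∫⁻ s in Ioc (0:ℝ) (t - τ), _ := by
        refine setLIntegral_mono' measurableSet_Ioc fun s hs => ?_
        calc (⊤ : ℝ≥0∞) = ∫⁻ η in S, ⊤ := by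
              rw [setLIntegral_const, ENNReal.top_mul hblow.ne']
          _ ≤ ∫⁻ η in S, _ := by
              refine lintegral_mono_ae ?_
              refine (ae_restrict_iff' hSm).2 ?_
              filter_upwards [ne0, q, coef_ae γ hξ] with η a b c hη
              have p := persist γ v heq a hτ.le (d := t - s - τ) (by linarith [hs.2])
              have e : τ + (t - s - τ) = t - s := by ring
              rw [e, show v η τ = ⊤ from hη, ENNReal.mul_top
                (ENNReal.ofReal_pos.2 (Real.exp_pos _)).ne', top_le_iff] at p
              rw [p, ENNReal.top_mul (hpos _ b _ (by linarith [hs.2])).ne',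
                ENNReal.mul_top (c s).ne']
          _ ≤ _ := setLIntegral_le_lintegral _ _
    _ ≤ _ := lintegral_mono_set (Ioc_subset_Ioc_right (by linarith))
end

section
/- Let γ ∈ (1/2,1), c₀ = 1/(2π), and let M > 500·7^{2γ}. Set T* = −7^{−2γ} ln(1 − 500·7^{2γ}/M). Suppose v : (ℝ² \ {0}) × [0,∞) → [0,∞] is measurable, v₀(ξ) = v(ξ,0) satisfies v₀(ξ) ≥ M for all ξ with 4 ≤ |ξ| ≤ 7, and v satisfies for all ξ ≠ 0 and t ≥ 0: v(ξ,t) = v₀(ξ) e^{−|ξ|^{2γ}t} + (c₀/2) ∫_0^t ∫_{ℝ²} |ξ| e^{−|ξ|^{2γ}s} v(η,t−s) v(ξ−η,t−s) |sin(θ(ξ,η) − θ(ξ,ξ−η))| dη ds. Then the set {(ξ,t) ∈ ℝ² × (0,T*) : v(ξ,t) = ∞} has positive Lebesgue measure. -/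
open MeasureTheory Set ENNReal

/-- Truncated square of the geometric series dominates its formal derivative. -/
lemma aux_geom_sq (z : ℝ) (hz : 0 ≤ z) (n : ℕ) :
    ∑ k ∈ Finset.range n, ((k:ℝ)+1) * z^k ≤ (∑ k ∈ Finset.range n, z^k)^2 := by
  induction n with
  | zero => simp
  | succ n ih =>
    have h1 : ∑ k ∈ Finset.range (n+1), z^k = z * ∑ k ∈ Finset.range n, z^k + 1 := by
      rw [Finset.sum_range_succ', Finset.mul_sum]
      simp [pow_succ, mul_comm]
    have h2 : ∑ k ∈ Finset.range (n+1), ((k:ℝ)+1) * z^k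
        = (∑ k ∈ Finset.range (n+1), z^k) + z * ∑ k ∈ Finset.range n, ((k:ℝ)+1) * z^k := by
      have : ∑ k ∈ Finset.range (n+1), ((k:ℝ)+1) * z^k
        = ∑ k ∈ Finset.range (n+1), (k:ℝ) * z^k + ∑ k ∈ Finset.range (n+1), z^k := by
        rw [← Finset.sum_add_distrib]
        exact Finset.sum_congr rfl fun k _ => by ring
      rw [this, Finset.sum_range_succ', Finset.mul_sum, add_comm]
      congr 1
      simp only [Nat.cast_zero, zero_mul, add_zero]
      exact Finset.sum_congr rfl fun k _ => by push_cast; ring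
    have h3 : ∑ k ∈ Finset.range n, z^k ≤ ∑ k ∈ Finset.range (n+1), z^k := by
      rw [Finset.sum_range_succ]
      have := pow_nonneg hz n
      linarith
    have h0 : 0 ≤ ∑ k ∈ Finset.range n, z^k := Finset.sum_nonneg fun k _ => pow_nonneg hz k
    rw [h2]
    have h4 := mul_le_mul_of_nonneg_left ih hz
    have h5 := mul_nonneg hz (mul_nonneg h0 (sub_nonneg.2 h3))
    set S := ∑ k ∈ Finset.range n, z^k
    set S' := ∑ k ∈ Finset.range (n+1), z^k
    have : S'^2 = S' + z * S * S' := by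
      conv_lhs => rw [sq]
      nth_rewrite 1 [h1]
      ring
    rw [this]
    nlinarith

/-- The rotation by a right angle. -/
noncomputable def auxJ (ξ : EuclideanSpace ℝ (Fin 2)) : EuclideanSpace ℝ (Fin 2) :=
  !₂[-(ξ 1), ξ 0]

/-- The centre of the ball of interacting frequencies. -/
noncomputable def auxC (ξ : EuclideanSpace ℝ (Fin 2)) : EuclideanSpace ℝ (Fin 2) :=
  (1/2 + 1/‖ξ‖) • ξ + (22/5/‖ξ‖) • auxJ ξ

lemma aux_nsq (x : EuclideanSpace ℝ (Fin 2)) : ‖x‖^2 = x 0 ^2 + x 1 ^2 := by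
  rw [EuclideanSpace.norm_sq_eq]; simp

lemma aux_inner (x y : EuclideanSpace ℝ (Fin 2)) : inner ℝ x y = x 0 * y 0 + x 1 * y 1 := by
  simp [PiLp.inner_apply, Fin.sum_univ_two, mul_comm]

lemma aux_ball (ξ η : EuclideanSpace ℝ (Fin 2)) (h4 : 4 ≤ ‖ξ‖)
    (hη : η ∈ Metric.ball (auxC ξ) (2/5)) :
    ∃ a b : ℝ, ξ 0 * η 0 + ξ 1 * η 1 = ‖ξ‖ * a ∧ ξ 0 * η 1 - ξ 1 * η 0 = ‖ξ‖ * b ∧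
      ‖ξ‖/2 + 3/5 ≤ a ∧ a ≤ ‖ξ‖/2 + 7/5 ∧ 4 ≤ b ∧ b ≤ 24/5 := by
  set R := ‖ξ‖ with hR
  have hRp : 0 < R := by linarith
  have hR2 : R^2 = ξ 0 ^2 + ξ 1 ^2 := aux_nsq ξ
  obtain ⟨δ, hδ⟩ : ∃ δ, δ = η - auxC ξ := ⟨_, rfl⟩
  have hδn : ‖δ‖ < 2/5 := by rw [hδ, ← dist_eq_norm]; exact hη
  have hδ2 : δ 0 ^2 + δ 1 ^2 ≤ (2/5)^2 := by
    rw [← aux_nsq]; exact pow_le_pow_left₀ (norm_nonneg _) hδn.le 2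
  have e0 : η 0 = (1/2 + 1/R) * ξ 0 - (22/5/R) * ξ 1 + δ 0 := by
    rw [hδ]; simp [auxC, auxJ, ← hR]; ring
  have e1 : η 1 = (1/2 + 1/R) * ξ 1 + (22/5/R) * ξ 0 + δ 1 := by
    rw [hδ]; simp [auxC, auxJ, ← hR]
  have key1 : |ξ 0 * δ 0 + ξ 1 * δ 1| ≤ R * (2/5) := by
    apply abs_le_of_sq_le_sq _ (by positivity)
    rw [mul_pow, hR2]
    nlinarith [sq_nonneg (ξ 0 * δ 1 - ξ 1 * δ 0),
      mul_le_mul_of_nonneg_left hδ2 (by positivity : 0 ≤ ξ 0 ^2 + ξ 1 ^2)]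
  have key2 : |ξ 0 * δ 1 - ξ 1 * δ 0| ≤ R * (2/5) := by
    apply abs_le_of_sq_le_sq _ (by positivity)
    rw [mul_pow, hR2]
    nlinarith [sq_nonneg (ξ 0 * δ 0 + ξ 1 * δ 1),
      mul_le_mul_of_nonneg_left hδ2 (by positivity : 0 ≤ ξ 0 ^2 + ξ 1 ^2)]
  have key1' : |(ξ 0 * δ 0 + ξ 1 * δ 1)/R| ≤ 2/5 := by
    rw [abs_div, abs_of_pos hRp, div_le_iff₀ hRp]; linarith
  have key2' : |(ξ 0 * δ 1 - ξ 1 * δ 0)/R| ≤ 2/5 := by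
    rw [abs_div, abs_of_pos hRp, div_le_iff₀ hRp]; linarith
  rw [abs_le] at key1' key2'
  refine ⟨R/2 + 1 + (ξ 0 * δ 0 + ξ 1 * δ 1)/R, 22/5 + (ξ 0 * δ 1 - ξ 1 * δ 0)/R,
    ?_, ?_, by linarith, by linarith, by linarith, by linarith⟩
  · rw [e0, e1]
    field_simp
    linear_combination (-5*(R+2)) * hR2
  · rw [e0, e1]
    field_simp
    linear_combination (-44) * hR2

lemma aux_geo (ξ η : EuclideanSpace ℝ (Fin 2)) (h4 : 4 ≤ ‖ξ‖) (h7 : ‖ξ‖ ≤ 7)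
    (hη : η ∈ Metric.ball (auxC ξ) (2/5)) :
    (4 ≤ ‖η‖ ∧ ‖η‖ ≤ 7) ∧ (4 ≤ ‖ξ - η‖ ∧ ‖ξ - η‖ ≤ 7) ∧
    2/49 ≤ |Real.sin (InnerProductGeometry.angle ξ η
                - InnerProductGeometry.angle ξ (ξ - η))| := by
  obtain ⟨a, b, ha, hb, ha1, ha2, hb1, hb2⟩ := aux_ball ξ η h4 hη
  have hsin1 := InnerProductGeometry.sin_angle_mul_norm_mul_norm ξ η
  have hsin2 := InnerProductGeometry.sin_angle_mul_norm_mul_norm ξ (ξ - η)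
  have hcos1 := InnerProductGeometry.cos_angle_mul_norm_mul_norm ξ η
  have hcos2 := InnerProductGeometry.cos_angle_mul_norm_mul_norm ξ (ξ - η)
  have hR2 := aux_nsq ξ
  have hN := aux_nsq η
  have hN' := aux_nsq (ξ - η)
  simp only [aux_inner, PiLp.sub_apply] at hsin1 hsin2 hcos1 hcos2 hN'
  set R := ‖ξ‖ with hR
  set N := ‖η‖
  set N' := ‖ξ - η‖
  have hRp : 0 < R := by linarith
  have n1 : N^2 = a^2 + b^2 := by
    have : R^2 * N^2 = R^2 * (a^2+b^2) := by
      have : R^2 * (a^2+b^2) = (R*a)^2 + (R*b)^2 := by ring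
      rw [this, ← ha, ← hb, hR2, hN]; ring
    exact mul_left_cancel₀ (by positivity) this
  have n2 : N'^2 = (R-a)^2 + b^2 := by
    rw [hN']
    linear_combination n1 - hR2 - hN - 2 * ha
  have s1 : √((ξ 0 * ξ 0 + ξ 1 * ξ 1) * (η 0 * η 0 + η 1 * η 1) -
      (ξ 0 * η 0 + ξ 1 * η 1) * (ξ 0 * η 0 + ξ 1 * η 1)) = R * b := by
    rw [Real.sqrt_eq_iff_mul_self_eq_of_pos (by positivity), ← hb]
    ring
  have s2 : √((ξ 0 * ξ 0 + ξ 1 * ξ 1) * ((ξ 0 - η 0) * (ξ 0 - η 0) + (ξ 1 - η 1) * (ξ 1 - η 1)) -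
      (ξ 0 * (ξ 0 - η 0) + ξ 1 * (ξ 1 - η 1)) * (ξ 0 * (ξ 0 - η 0) + ξ 1 * (ξ 1 - η 1)))
      = R * b := by
    rw [Real.sqrt_eq_iff_mul_self_eq_of_pos (by positivity), ← hb]
    ring
  rw [s1] at hsin1
  rw [s2] at hsin2
  rw [ha] at hcos1
  have c2 : ξ 0 * (ξ 0 - η 0) + ξ 1 * (ξ 1 - η 1) = R * (R - a) := by
    linear_combination -hR2 - ha
  rw [c2] at hcos2
  have N0 : 0 ≤ N := norm_nonneg _
  have N0' : 0 ≤ N' := norm_nonneg _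
  have hbb1 : 16 ≤ b^2 := by nlinarith only [hb1]
  have hbb2 : b^2 ≤ 24 := by nlinarith only [hb1, hb2]
  have haa : a^2 ≤ 25 := by nlinarith only [ha1, ha2, h7, hRp]
  have haa2 : (R-a)^2 ≤ 25 := by nlinarith only [ha1, ha2, h7, h4]
  have A1 : 4 ≤ N := by nlinarith only [n1, hbb1, N0, sq_nonneg a]
  have A2 : N ≤ 7 := by nlinarith only [n1, hbb2, N0, haa]
  have B1 : 4 ≤ N' := by nlinarith only [n2, hbb1, N0', sq_nonneg (R-a)]
  have B2 : N' ≤ 7 := by nlinarith only [n2, hbb2, N0', haa2]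
  refine ⟨⟨A1, A2⟩, ⟨B1, B2⟩, ?_⟩
  rw [Real.sin_sub]
  set sα := Real.sin (InnerProductGeometry.angle ξ η)
  set sβ := Real.sin (InnerProductGeometry.angle ξ (ξ - η))
  set cα := Real.cos (InnerProductGeometry.angle ξ η)
  set cβ := Real.cos (InnerProductGeometry.angle ξ (ξ - η))
  have q1 : sα * N = b := mul_left_cancel₀ hRp.ne' (by linarith)
  have q2 : sβ * N' = b := mul_left_cancel₀ hRp.ne' (by linarith)
  have q3 : cα * N = a := mul_left_cancel₀ hRp.ne' (by linarith)
  have q4 : cβ * N' = R - a := mul_left_cancel₀ hRp.ne' (by linarith)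
  have q : (cα * sβ - sα * cβ) * (N * N') = b * (2 * a - R) := by
    have : (cα * sβ - sα * cβ) * (N * N') = (cα * N) * (sβ * N') - (sα * N) * (cβ * N') := by ring
    rw [this, q1, q2, q3, q4]; ring
  have hlow : 4 ≤ b * (2 * a - R) := by nlinarith only [hb1, ha1]
  have hNN : N * N' ≤ 49 := by nlinarith only [A1, A2, B1, B2]
  have hNNp : 0 < N * N' := by nlinarith only [A1, A2, B1, B2]
  rw [abs_sub_comm]
  refine le_trans ?_ (le_abs_self _)
  by_contra hc
  rw [not_le] at hc
  nlinarith only [hc, hlow, hNN, hNNp, q]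

lemma aux_step (γ : ℝ) (hγ : γ ∈ Set.Ioo (1/2 : ℝ) 1) (M : ℝ) (hM : 0 < M)
    (v : EuclideanSpace ℝ (Fin 2) → ℝ → ℝ≥0∞)
    (heq : Solves2D γ v)
    (hv₀ : ∀ ξ : EuclideanSpace ℝ (Fin 2), 4 ≤ ‖ξ‖ → ‖ξ‖ ≤ 7 →
      ENNReal.ofReal M ≤ v ξ 0) (l : ℝ) (hl : l = (7:ℝ)^(2*γ)) (n : ℕ) :
    ∀ ξ : EuclideanSpace ℝ (Fin 2), 4 ≤ ‖ξ‖ → ‖ξ‖ ≤ 7 → ∀ t : ℝ, 0 ≤ t →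
      ENNReal.ofReal (M * Real.exp (-l * t) *
        ∑ k ∈ Finset.range n, (M / 250 / l * (1 - Real.exp (-l * t)))^k) ≤ v ξ t := by
  have hlp : 0 < l := by rw [hl]; positivity
  induction n with
  | zero => simp
  | succ n ih =>
    intro ξ h4 h7 t ht
    have hne : ξ ≠ 0 := by rintro rfl; norm_num at h4
    have hpow : ‖ξ‖ ^ (2*γ) ≤ l := by
      rw [hl]; exact Real.rpow_le_rpow (norm_nonneg _) h7 (by linarith [hγ.1])
    have hexp : ∀ s : ℝ, 0 ≤ s → Real.exp (-l * s) ≤ Real.exp (-(‖ξ‖ ^ (2*γ)) * s) := by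
      intro s hs
      apply Real.exp_le_exp.2
      nlinarith
    set z : ℝ → ℝ := fun τ => M / 250 / l * (1 - Real.exp (-l * τ)) with hz
    have hz0 : ∀ τ, 0 ≤ τ → 0 ≤ z τ := by
      intro τ hτ
      have : Real.exp (-l * τ) ≤ 1 := Real.exp_le_one_iff.2 (by nlinarith)
      exact mul_nonneg (by positivity) (by linarith)
    have hzd : ∀ τ, HasDerivAt z (M / 250 * Real.exp (-l * τ)) τ := by
      intro τ
      have h1 : HasDerivAt (fun τ : ℝ => -l * τ) (-l) τ := by
        simpa using (hasDerivAt_id τ).const_mul (-l)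
      have := (h1.exp.const_sub 1).const_mul (M / 250 / l)
      refine this.congr_deriv ?_
      field_simp
    have hzc : Continuous z := continuous_iff_continuousAt.2 fun τ => (hzd τ).continuousAt
    set g : ℝ → ℝ := fun τ => M * Real.exp (-l * τ) * ∑ k ∈ Finset.range n, (z τ)^k with hg
    have hg0 : ∀ τ, 0 ≤ τ → 0 ≤ g τ := fun τ hτ =>
      mul_nonneg (by positivity) (Finset.sum_nonneg fun k _ => pow_nonneg (hz0 τ hτ) k)
    set F : ℝ → ℝ := fun s => -(M * Real.exp (-l * t) * ∑ k ∈ Finset.range n, (z (t - s))^(k+1))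
      with hF
    set f : ℝ → ℝ := fun s => M * Real.exp (-l * t) * (M / 250 * Real.exp (-l * (t - s)) *
      ∑ k ∈ Finset.range n, ((k:ℝ)+1) * (z (t - s))^k) with hf
    have hfc : Continuous f := by
      simp only [hf]
      fun_prop
    have hFd : ∀ s, HasDerivAt F (f s) s := by
      intro s
      have h1 : HasDerivAt (fun s : ℝ => t - s) (-1) s := by
        simpa using (hasDerivAt_id s).const_sub t
      have h2 : HasDerivAt (fun s => z (t - s)) (M / 250 * Real.exp (-l * (t - s)) * (-1)) s :=
        (hzd (t - s)).comp s h1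
      have h3 := ((HasDerivAt.fun_sum (u := Finset.range n) (fun k _ => h2.pow (k+1))).const_mul
        (M * Real.exp (-l * t))).neg
      refine HasDerivAt.congr_deriv h3 ?_
      simp only [hf]
      simp only [Finset.mul_sum, ← Finset.sum_neg_distrib]
      refine Finset.sum_congr rfl fun k _ => ?_
      push_cast
      try rw [Nat.add_sub_cancel]
      ring
    have hint : ∫ s in (0:ℝ)..t, f s
        = M * Real.exp (-l * t) * ∑ k ∈ Finset.range n, (z t)^(k+1) := by
      rw [intervalIntegral.integral_eq_sub_of_hasDerivAt (fun s _ => hFd s)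
        (hfc.intervalIntegrable _ _)]
      simp [hF, hz]
    have hf0 : ∀ s, s ≤ t → 0 ≤ f s := by
      intro s hs
      refine mul_nonneg (by positivity) (mul_nonneg (by positivity) (Finset.sum_nonneg fun k _ => ?_))
      exact mul_nonneg (by positivity) (pow_nonneg (hz0 _ (by linarith)) k)
    have hlint : ENNReal.ofReal (M * Real.exp (-l * t) * ∑ k ∈ Finset.range n, (z t)^(k+1))
        = ∫⁻ s in Set.Ioc (0:ℝ) t, ENNReal.ofReal (f s) := by
      rw [← hint, intervalIntegral.integral_of_le ht]
      apply ofReal_integral_eq_lintegral_ofReal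
      · exact (hfc.intervalIntegrable 0 t).1
      · filter_upwards [ae_restrict_mem measurableSet_Ioc] with s hs
        exact hf0 s hs.2
    rw [heq ξ hne t ht, Finset.sum_range_succ', pow_zero, mul_add, mul_one, add_comm,
      ENNReal.ofReal_add (by positivity) (mul_nonneg (by positivity)
        (Finset.sum_nonneg fun k _ => pow_nonneg (hz0 t ht) _))]
    refine add_le_add ?_ ?_
    · rw [mul_comm M, ENNReal.ofReal_mul (by positivity)]
      exact mul_le_mul' (ENNReal.ofReal_le_ofReal (hexp t ht)) (hv₀ ξ h4 h7)
    · change ENNReal.ofReal (M * Real.exp (-l * t) * ∑ k ∈ Finset.range n, (z t)^(k+1)) ≤ _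
      rw [hlint]
      refine setLIntegral_mono' measurableSet_Ioc fun s hs => ?_
      have hts : 0 ≤ t - s := by linarith [hs.2]
      have hlow : ∀ η ∈ Metric.ball (auxC ξ) (2/5),
          ENNReal.ofReal ((1/(2*Real.pi))/2 * 4 * Real.exp (-l * s) * (2/49))
            * (ENNReal.ofReal (g (t-s)) * ENNReal.ofReal (g (t-s))) ≤
          ENNReal.ofReal ((1/(2*Real.pi))/2 * ‖ξ‖ * Real.exp (-(‖ξ‖ ^ (2*γ)) * s)
            * |Real.sin (InnerProductGeometry.angle ξ η
                - InnerProductGeometry.angle ξ (ξ - η))|)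
          * (v η (t - s) * v (ξ - η) (t - s)) := by
        intro η hη
        obtain ⟨⟨a1, a2⟩, ⟨b1, b2⟩, hsin⟩ := aux_geo ξ η h4 h7 hη
        refine mul_le_mul' (ENNReal.ofReal_le_ofReal ?_)
          (mul_le_mul' (ih η a1 a2 _ hts) (ih _ b1 b2 _ hts))
        have := hexp s hs.1.le
        gcongr
      refine le_trans ?_ (setLIntegral_le_lintegral (Metric.ball (auxC ξ) (2/5)) _)
      refine le_trans ?_ (setLIntegral_mono' Metric.isOpen_ball.measurableSet hlow)
      rw [setLIntegral_const, EuclideanSpace.volume_ball_fin_two,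
        ← ENNReal.ofReal_mul (hg0 _ hts), ← ENNReal.ofReal_mul (by positivity),
        ← ENNReal.ofReal_pow (by positivity)]
      rw [← ENNReal.ofReal_mul (by positivity), ← ENNReal.ofReal_mul
        (mul_nonneg (by positivity) (mul_self_nonneg _))]
      apply ENNReal.ofReal_le_ofReal
      have hgeo := aux_geom_sq (z (t - s)) (hz0 _ hts) n
      have hE : Real.exp (-l * t) = Real.exp (-l * s) * Real.exp (-l * (t - s)) := by
        rw [← Real.exp_add]; congr 1; ring
      simp only [hf, hg, hE]
      set E := Real.exp (-l * s)
      set E' := Real.exp (-l * (t - s))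
      set D := ∑ k ∈ Finset.range n, ((k:ℝ)+1) * (z (t - s))^k
      set S := ∑ k ∈ Finset.range n, (z (t - s))^k
      have hpi := Real.pi_pos
      have r : 1 / (2 * Real.pi) / 2 * 4 * E * (2 / 49) * (M * E' * S * (M * E' * S)) *
          ((2 / 5) ^ 2 * Real.pi) = (8/1225) * (M^2 * E * E'^2) * S^2 := by
        field_simp
        ring
      rw [r]
      have l1 : M * (E * E') * (M / 250 * E' * D) = (1/250) * (M^2 * E * E'^2) * D := by ring
      rw [l1]
      have hP : 0 ≤ M^2 * E * E'^2 := by positivity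
      have h1 := mul_le_mul_of_nonneg_left hgeo hP
      have h2 := mul_nonneg hP (sq_nonneg S)
      nlinarith

theorem stmt16 (γ : ℝ) (hγ : γ ∈ Set.Ioo (1/2 : ℝ) 1)
    (M : ℝ) (hM : 500 * (7:ℝ) ^ (2*γ) < M)
    (v : EuclideanSpace ℝ (Fin 2) → ℝ → ℝ≥0∞)
    (hmeas : Measurable (Function.uncurry v))
    (heq : Solves2D γ v)
    (hv₀ : ∀ ξ : EuclideanSpace ℝ (Fin 2), 4 ≤ ‖ξ‖ → ‖ξ‖ ≤ 7 →
      ENNReal.ofReal M ≤ v ξ 0) :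
    0 < (volume : Measure (EuclideanSpace ℝ (Fin 2) × ℝ))
        {p : EuclideanSpace ℝ (Fin 2) × ℝ |
          0 < p.2 ∧ p.2 < -(7:ℝ) ^ (-(2*γ)) * Real.log (1 - 500 * (7:ℝ) ^ (2*γ) / M) ∧
          v p.1 p.2 = ⊤} := by
  rw [Real.rpow_neg (by norm_num)]
  have hstep := fun n => aux_step γ hγ M (lt_trans (by positivity) hM) v heq hv₀ _ rfl n
  have hlp : 0 < (7:ℝ)^(2*γ) := by positivity
  set l := (7:ℝ)^(2*γ)
  have hMp : 0 < M := lt_trans (by positivity) hM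
  have hq : 500 * l / M < 1 := (div_lt_one hMp).2 hM
  have hq0 : 0 < l / M := by positivity
  have hq' : 500 * l / M = 500 * (l / M) := by ring
  rw [hq'] at hq ⊢
  set q := l / M with hqdef
  set T1 := -l⁻¹ * Real.log (1 - 250 * q) with hT1
  set T := -l⁻¹ * Real.log (1 - 500 * q) with hT
  have hlog : Real.log (1 - 500 * q) < Real.log (1 - 250 * q) :=
    Real.log_lt_log (by linarith) (by linarith)
  have hli : 0 < l⁻¹ := by positivity
  have hT1T : T1 < T := by simp only [hT1, hT]; nlinarith
  have hT1p : 0 < T1 := by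
    have : Real.log (1 - 250 * q) < 0 := Real.log_neg (by linarith) (by linarith)
    simp only [hT1]; nlinarith
  have hU : IsOpen ({ξ : EuclideanSpace ℝ (Fin 2) | 4 < ‖ξ‖ ∧ ‖ξ‖ < 7} ×ˢ Set.Ioo T1 T) :=
    ((isOpen_lt continuous_const continuous_norm).inter
      (isOpen_lt continuous_norm continuous_const)).prod isOpen_Ioo
  have hUne : ({ξ : EuclideanSpace ℝ (Fin 2) | 4 < ‖ξ‖ ∧ ‖ξ‖ < 7} ×ˢ Set.Ioo T1 T).Nonempty := by
    refine Set.Nonempty.prod ⟨EuclideanSpace.single 0 5, ?_⟩ (nonempty_Ioo.2 hT1T)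
    simp only [mem_setOf_eq, EuclideanSpace.norm_single]
    norm_num
  refine lt_of_lt_of_le (hU.measure_pos volume hUne) (measure_mono ?_)
  rintro ⟨ξ, t⟩ ⟨⟨h4, h7⟩, ht1, ht2⟩
  simp only at h4 h7 ht1 ht2
  refine ⟨hT1p.trans ht1, ht2, ?_⟩
  have ht0 : 0 < t := hT1p.trans ht1
  have hexp : Real.exp (-l * t) ≤ 1 - 250 * q := by
    rw [← Real.le_log_iff_exp_le (by linarith)]
    have h := mul_lt_mul_of_pos_left ht1 hlp
    have : l * T1 = - Real.log (1 - 250 * q) := by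
      simp only [hT1]; field_simp
    linarith
  have hz : 1 ≤ M / 250 / l * (1 - Real.exp (-l * t)) := by
    have h1 : M / 250 / l * (250 * q) = 1 := by
      simp only [hqdef]; field_simp
    rw [← h1]
    exact mul_le_mul_of_nonneg_left (by linarith) (by positivity)
  change v ξ t = ⊤
  by_contra hne
  have hE : 0 < M * Real.exp (-l * t) := by positivity
  obtain ⟨n, hn⟩ := exists_nat_gt ((v ξ t).toReal / (M * Real.exp (-l * t)))
  have h := hstep n ξ h4.le h7.le t ht0.le
  have h2 := (ENNReal.ofReal_le_iff_le_toReal hne).1 h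
  rw [div_lt_iff₀ hE] at hn
  have h3 : (n:ℝ) ≤ ∑ k ∈ Finset.range n, (M / 250 / l * (1 - Real.exp (-l * t)))^k := by
    calc (n:ℝ) = ∑ k ∈ Finset.range n, (1:ℝ) := by simp
      _ ≤ _ := Finset.sum_le_sum fun k _ => one_le_pow₀ hz
  have := mul_le_mul_of_nonneg_left h3 hE.le
  linarith
end
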